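/- Let K be a field, A = K[x_1, ..., x_n], and F ∈ A^{l×m} with rank(F) = r > 0 and d_r(F) = p^t (up to a unit), where p ∈ K[x_1] is an irreducible polynomial and t is a positive integer. Assume the Smith form of F is the block matrix with diag(p^{s_1}, ..., p^{s_r}) in the upper-left r × r corner and zeros elsewhere, with s_1 ≤ ... ≤ s_r. Then F is equivalent to its Smith form if and only if J_i(F) = A for all i = 1, ..., r. -/

import Mathlib

/-- Two `l × m` matrices over a commutative ring are equivalent if they differ by
left/right multiplication by square matrices with unit determinant. -/
def MatrixEquiv {B : Type*} [CommRing B] {l m : ℕ}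
    (F G : Matrix (Fin l) (Fin m) B) : Prop :=
  ∃ (U : Matrix (Fin l) (Fin l) B) (V : Matrix (Fin m) (Fin m) B),
    IsUnit U.det ∧ IsUnit V.det ∧ F = U * G * V

/-- The set of all `i × i` minors of a matrix. -/
def minorsSet {R : Type*} [CommRing R] {l m : ℕ} (i : ℕ)
    (F : Matrix (Fin l) (Fin m) R) : Set R :=
  {a | ∃ (f : Fin i → Fin l) (g : Fin i → Fin m),
      StrictMono f ∧ StrictMono g ∧ a = (F.submatrix f g).det}

/-- `d` is a greatest common divisor of the set `s`. -/
def IsGcdOf {R : Type*} [CommRing R] (d : R) (s : Set R) : Prop :=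
  (∀ a ∈ s, d ∣ a) ∧ ∀ c : R, (∀ a ∈ s, c ∣ a) → c ∣ d

/-- `J_i(F) = A`: letting `d` be a gcd of the `i × i` minors of `F`, the `i × i`
reduced minors (the minors divided by `d`) generate the unit ideal. -/
def ReducedMinorsUnitIdeal {R : Type*} [CommRing R] {l m : ℕ} (i : ℕ)
    (F : Matrix (Fin l) (Fin m) R) : Prop :=
  ∃ d : R, IsGcdOf d (minorsSet i F) ∧
    Ideal.span {b : R | d * b ∈ minorsSet i F} = ⊤

/-- The image of a univariate polynomial `p ∈ K[x₁]` in `A = K[x₁, …, x_{n+1}]`,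
sending the variable to `x₁` (the variable of index `0`). -/
noncomputable def polyImage {K : Type*} [CommRing K] (n : ℕ) (p : Polynomial K) :
    MvPolynomial (Fin (n + 1)) K :=
  Polynomial.aeval (MvPolynomial.X 0) p

universe u v

section QuillenSuslin

open Polynomial
open scoped Matrix

/-- `M` has a resolution of length at most `n` by finite free `R`-modules. -/
def HasFiniteFreeResolution (R : Type u) [CommRing R] :
    ℕ → ∀ (M : Type u) [AddCommGroup M] [Module R M], Prop
  | 0, M, _, _ => Module.Finite R M ∧ Module.Free R M
  | n + 1, M, _, _ => ∃ (N F : Type u) (_ : AddCommGroup N) (_ : Module R N)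
      (_ : AddCommGroup F) (_ : Module R F) (i : N →ₗ[R] F) (f : F →ₗ[R] M),
      Module.Finite R F ∧ Module.Free R F ∧ Function.Injective i ∧ Function.Exact i f ∧
        Function.Surjective f ∧ HasFiniteFreeResolution R n N

namespace HasFiniteFreeResolution

variable {R : Type u} [CommRing R]

theorem succ {n : ℕ} {M : Type u} [AddCommGroup M] [Module R M]
    (h : HasFiniteFreeResolution R n M) : HasFiniteFreeResolution R (n + 1) M := by
  induction n generalizing M with
  | zero =>
    obtain ⟨_, _⟩ := h
    refine ⟨PUnit, M, inferInstance, inferInstance, inferInstance, inferInstance, 0, .id,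
      inferInstance, inferInstance, fun _ _ _ => rfl, fun x => ?_, fun x => ⟨x, rfl⟩,
      inferInstance, inferInstance⟩
    simp [eq_comm]
  | succ n ih =>
    obtain ⟨N, F, _, _, _, _, i, f, h1, h2, h3, h4, h5, h6⟩ := h
    exact ⟨N, F, _, _, _, _, i, f, h1, h2, h3, h4, h5, ih h6⟩

theorem mono {n m : ℕ} (hnm : n ≤ m) {M : Type u} [AddCommGroup M] [Module R M]
    (h : HasFiniteFreeResolution R n M) : HasFiniteFreeResolution R m M := by
  induction m, hnm using Nat.le_induction with
  | base => exact h
  | succ m _ ih => exact ih.succ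

theorem prod_free {n : ℕ} {M : Type u} [AddCommGroup M] [Module R M]
    (h : HasFiniteFreeResolution R n M) (G : Type u) [AddCommGroup G] [Module R G]
    [Module.Finite R G] [Module.Free R G] : HasFiniteFreeResolution R n (M × G) := by
  cases n with
  | zero =>
    obtain ⟨_, _⟩ := h
    exact ⟨inferInstance, inferInstance⟩
  | succ n =>
    obtain ⟨N, F, _, _, _, _, i, f, _, _, h3, h4, h5, h6⟩ := h
    refine ⟨N, F × G, _, _, _, _, LinearMap.inl R F G ∘ₗ i, f.prodMap .id, inferInstance,
      inferInstance, ?_, ?_, ?_, h6⟩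
    · exact LinearMap.inl_injective.comp h3
    · rintro ⟨a, b⟩
      have := h4 a
      simp only [LinearMap.prodMap_apply, Prod.mk_eq_zero, this, LinearMap.id_apply,
        LinearMap.coe_comp, Function.comp_apply, LinearMap.inl_apply, Set.mem_range, Prod.mk.injEq]
      constructor
      · rintro ⟨⟨x, rfl⟩, rfl⟩; exact ⟨x, rfl, rfl⟩
      · rintro ⟨x, rfl, rfl⟩; exact ⟨⟨x, rfl⟩, rfl⟩
    · exact Function.Surjective.prodMap h5 Function.surjective_id

theorem cokernel {n : ℕ} {A B C : Type u} [AddCommGroup A] [Module R A] [AddCommGroup B]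
    [Module R B] [AddCommGroup C] [Module R C] {j : A →ₗ[R] B} {q : B →ₗ[R] C}
    (hj : Function.Injective j) (hjq : Function.Exact j q) (hq : Function.Surjective q)
    (hA : HasFiniteFreeResolution R n A) (hB : HasFiniteFreeResolution R n B) :
    HasFiniteFreeResolution R (n + 1) C := by
  induction n generalizing A B C with
  | zero =>
    obtain ⟨h1, h2⟩ := hB
    exact ⟨A, B, _, _, _, _, j, q, h1, h2, hj, hjq, hq, hA⟩
  | succ n ih =>
    obtain ⟨N, F, _, _, _, _, i, f, _, _, hi, hif, hf, hN⟩ := hA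
    obtain ⟨N', F', _, _, _, _, i', f', _, _, hi', hif', hf', hN'⟩ := hB
    obtain ⟨h, hh⟩ := Module.projective_lifting_property f' (j ∘ₗ f) hf'
    have hh' (x) : f' (h x) = j (f x) := congr($hh x)
    let K := LinearMap.ker (q ∘ₗ f')
    obtain ⟨ξ, hξ⟩ : ∃ ξ : N →ₗ[R] N', ∀ x, i' (ξ x) = h (i x) := by
      have hr (x) : h (i x) ∈ LinearMap.range i' := by
        have : f' (h (i x)) = 0 := by rw [hh', (hif (i x)).2 ⟨x, rfl⟩, map_zero]
        exact (hif' _).1 this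
      refine ⟨(LinearEquiv.ofInjective i' hi').symm.toLinearMap ∘ₗ
        LinearMap.codRestrict _ (h ∘ₗ i) hr, fun x => ?_⟩
      have := (LinearEquiv.ofInjective i' hi').apply_symm_apply
        (LinearMap.codRestrict _ (h ∘ₗ i) hr x)
      exact congr(($this : F'))
    refine ⟨K, F', _, _, _, _, K.subtype, q ∘ₗ f', inferInstance, inferInstance,
      Subtype.val_injective, fun x => ?_, hq.comp hf', ?_⟩
    · simp [K]
    · let β : (N' × F) →ₗ[R] K := LinearMap.codRestrict K (i'.coprod h) fun x => by
        simp only [K, LinearMap.mem_ker, LinearMap.comp_apply, LinearMap.coprod_apply, map_add, hh',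
          (hif' (i' x.1)).2 ⟨_, rfl⟩, (hjq (j (f x.2))).2 ⟨_, rfl⟩, map_zero, add_zero]
      refine ih (j := (-ξ).prod i) (q := β) ?_ ?_ ?_ hN (hN'.prod_free F)
      · intro x y hxy
        exact hi congr(($hxy).2)
      · rintro ⟨x, a⟩
        have hval : β (x, a) = 0 ↔ i' x + h a = 0 := by
          rw [← Subtype.coe_inj]; rfl
        rw [hval]
        constructor
        · intro hx
          have h1 : f a = 0 := by
            apply hj
            have := congr(f' $hx)
            simpa [hh', (hif' (i' x)).2 ⟨_, rfl⟩] using this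
          obtain ⟨y, rfl⟩ := (hif a).1 h1
          refine ⟨y, Prod.ext (hi' ?_) rfl⟩
          simp [hξ, eq_neg_of_add_eq_zero_left hx]
        · rintro ⟨y, hy⟩
          obtain ⟨rfl, rfl⟩ := Prod.mk.inj hy
          simp [hξ]
      · rintro ⟨k, hk⟩
        obtain ⟨a', ha'⟩ := (hjq (f' k)).1 hk
        obtain ⟨a, rfl⟩ := hf a'
        obtain ⟨x, hx⟩ := (hif' (k - h a)).1 (by rw [map_sub, hh', ha', sub_self])
        exact ⟨(x, a), Subtype.ext (show i' x + h a = k by rw [hx, sub_add_cancel])⟩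

theorem isStablyFree {n : ℕ} {M : Type u} [AddCommGroup M] [Module R M]
    [Module.Projective R M] (h : HasFiniteFreeResolution R n M) : Module.IsStablyFree R M := by
  induction n generalizing M with
  | zero =>
    obtain ⟨_, _⟩ := h
    infer_instance
  | succ n ih =>
    obtain ⟨N, F, _, _, _, _, i, f, _, _, hi, hif, hf, hN⟩ := h
    obtain ⟨g, hg⟩ := f.exists_rightInverse_of_surjective (LinearMap.range_eq_top.2 hf)
    obtain ⟨e, he, he'⟩ := hif.splitSurjectiveEquiv hi ⟨g, hg⟩
    have : Module.Projective R N := by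
      refine Module.Projective.of_split i (LinearMap.fst R N M ∘ₗ e.toLinearMap) ?_
      rw [he]; ext; simp
    have : Module.Finite R N :=
      Module.Finite.of_surjective (LinearMap.fst R N M ∘ₗ e.toLinearMap)
        fun x => ⟨e.symm (x, 0), by simp⟩
    have := ih hN
    obtain ⟨G, _, _, _, _, _⟩ := Module.IsStablyFree.exist_free_prod R N
    have : Module.Free R (M × (N × G)) :=
      Module.Free.of_equiv (((e.trans (LinearEquiv.prodComm R N M)).prodCongr
        (LinearEquiv.refl R G)).trans (LinearEquiv.prodAssoc R M N G))
    exact Module.IsStablyFree.of_free_prod R M (N × G)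

end HasFiniteFreeResolution

namespace PolynomialModule

section

variable {R : Type*} [CommRing R] {M N : Type*} [AddCommGroup M] [Module R M]

instance [Module.Finite R M] : Module.Finite R[X] (PolynomialModule R M) :=
  Module.Finite.equiv (polynomialTensorProductLEquivPolynomialModule R M)

instance [Module.Free R M] : Module.Free R[X] (PolynomialModule R M) :=
  Module.Free.of_equiv (polynomialTensorProductLEquivPolynomialModule R M)

/-- The `R[X]`-linear map on `PolynomialModule R M` induced by an `R`-linear map on `M`. -/
noncomputable def mapPoly [AddCommGroup N] [Module R N] (f : M →ₗ[R] N) :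
    PolynomialModule R M →ₗ[R[X]] PolynomialModule R N where
  __ := map R f
  map_smul' p q := by
    have := map_smul R f p q
    simpa using this

theorem coeff_mapPoly [AddCommGroup N] [Module R N] (f : M →ₗ[R] N) (q : PolynomialModule R M)
    (k : ℕ) : (mapPoly f q).coeff k = f (q.coeff k) := rfl

/-- The `R[X]`-linear extension of an `R`-linear map from `M` to an `R[X]`-module. -/
noncomputable def extend [AddCommGroup N] [Module R N] [Module R[X] N] [IsScalarTower R R[X] N]
    (f : M →ₗ[R] N) : PolynomialModule R M →ₗ[R[X]] N :=
  f.liftBaseChange R[X] ∘ₗ (polynomialTensorProductLEquivPolynomialModule R M).symm.toLinearMap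

theorem lsingle_eq_single (k : ℕ) (m : M) : lsingle R k m = single R k m := rfl

theorem coeff_sub_apply (x y : PolynomialModule R M) (k : ℕ) :
    (x - y).coeff k = x.coeff k - y.coeff k := rfl

theorem coeff_add_apply (x y : PolynomialModule R M) (k : ℕ) :
    (x + y).coeff k = x.coeff k + y.coeff k := rfl

theorem coeff_single_apply (i : ℕ) (m : M) (k : ℕ) :
    (single R i m).coeff k = if i = k then m else 0 := by
  rw [coeff_single, Finsupp.single_apply]

theorem single_eq_X_pow_smul (k : ℕ) (m : M) : single R k m = (X ^ k : R[X]) • single R 0 m := by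
  rw [← monomial_one_right_eq_X_pow, monomial_smul_single, add_zero, one_smul]

theorem extend_single [AddCommGroup N] [Module R N] [Module R[X] N] [IsScalarTower R R[X] N]
    (f : M →ₗ[R] N) (k : ℕ) (m : M) : extend f (single R k m) = (X ^ k : R[X]) • f m := by
  have h : (polynomialTensorProductLEquivPolynomialModule R M).symm (single R 0 m) =
      TensorProduct.tmul R 1 m := by
    rw [LinearEquiv.symm_apply_eq]
    simp [polynomialTensorProductLEquivPolynomialModule, lsingle_eq_single]
  rw [single_eq_X_pow_smul, LinearMap.map_smul]
  simp [extend, h]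

end
end PolynomialModule

namespace HasFiniteFreeResolution
open PolynomialModule

variable {R : Type u} [CommRing R]

theorem polynomialModule {n : ℕ} {M : Type u} [AddCommGroup M] [Module R M]
    (h : HasFiniteFreeResolution R n M) :
    HasFiniteFreeResolution R[X] n (PolynomialModule R M) := by
  induction n generalizing M with
  | zero =>
    obtain ⟨_, _⟩ := h
    exact ⟨inferInstance, inferInstance⟩
  | succ n ih =>
    obtain ⟨N, F, _, _, _, _, i, f, _, _, hi, hif, hf, hN⟩ := h
    refine ⟨PolynomialModule R N, PolynomialModule R F, _, _, _, _, mapPoly i, mapPoly f,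
      inferInstance, inferInstance, fun x y hxy => ?_, fun x => ?_, fun x => ?_, ih hN⟩
    · refine coeff_injective (Finsupp.ext fun k => hi ?_)
      rw [← coeff_mapPoly, hxy, coeff_mapPoly]
    · constructor
      · intro hx
        have hx' (k) : x.coeff k ∈ Set.range i := (hif _).1 (by
          rw [← coeff_mapPoly, hx]; rfl)
        choose y hy using hx'
        let z : ℕ →₀ N := Finsupp.onFinset x.coeff.support y fun k hk => by
          rw [Finsupp.mem_support_iff, ← hy]
          exact fun h0 => hk (hi (by rw [h0, map_zero]))
        exact ⟨ofCoeff R z, coeff_injective (Finsupp.ext hy)⟩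
      · rintro ⟨y, rfl⟩
        refine coeff_injective (Finsupp.ext fun k => ?_)
        rw [coeff_mapPoly, coeff_mapPoly]
        exact (hif _).2 ⟨_, rfl⟩
    · obtain ⟨y, hy⟩ := Finsupp.mapRange_surjective f (map_zero f) hf x.coeff
      exact ⟨ofCoeff R y, coeff_injective hy⟩

end HasFiniteFreeResolution

section DegreeFiltration
open PolynomialModule

variable {R : Type u} [CommRing R] {ι : Type} (K : Submodule R[X] (ι → R[X]))

/-- The vectors in `K` all of whose components have degree less than `d`. -/
def Submodule.degreeLTPart (d : ℕ) : Submodule R (ι → R[X]) where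
  carrier := {v | v ∈ K ∧ ∀ i k, d ≤ k → (v i).coeff k = 0}
  add_mem' := fun ha hb => ⟨K.add_mem ha.1 hb.1, fun i k hk => by
    simp [ha.2 i k hk, hb.2 i k hk]⟩
  zero_mem' := ⟨K.zero_mem, by simp⟩
  smul_mem' := fun c x hx => ⟨by
      rw [← algebraMap_smul R[X] c x]; exact K.smul_mem _ hx.1,
    fun i k hk => by simp [hx.2 i k hk]⟩

theorem Submodule.finite_degreeLTPart [IsNoetherianRing R] [Finite ι] (d : ℕ) :
    Module.Finite R (K.degreeLTPart d) := by
  let f : (ι → R[X]) →ₗ[R] (ι → Fin d → R) :=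
    LinearMap.pi fun i => LinearMap.pi fun k => lcoeff R k ∘ₗ LinearMap.proj i
  refine Module.Finite.of_injective (f ∘ₗ (K.degreeLTPart d).subtype)
    fun x y hxy => Subtype.ext (funext fun i => Polynomial.ext fun k => ?_)
  rcases lt_or_ge k d with hk | hk
  · exact congr($hxy i ⟨k, hk⟩)
  · rw [x.2.2 i k hk, y.2.2 i k hk]

/-- Multiplication by `X` from the part of degree `< d` to the part of degree `< d + 1`. -/
noncomputable def Submodule.mulXPart (d : ℕ) :
    K.degreeLTPart d →ₗ[R] K.degreeLTPart (d + 1) where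
  toFun a := ⟨(X : R[X]) • a.1, K.smul_mem _ a.2.1, fun i k hk => by
    obtain ⟨k, rfl⟩ := Nat.exists_eq_succ_of_ne_zero (Nat.ne_zero_of_lt hk)
    simpa using a.2.2 i k (by omega)⟩
  map_add' a b := Subtype.ext (by simp)
  map_smul' c a := Subtype.ext (smul_comm (X : R[X]) c a.1)

theorem Submodule.degreeLTPart_mono (d : ℕ) : K.degreeLTPart d ≤ K.degreeLTPart (d + 1) :=
  fun _ hv => ⟨hv.1, fun i k hk => hv.2 i k (by omega)⟩

/-- The relations between the generators of degree at most `d`. -/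
noncomputable def Submodule.charRel (d : ℕ) :
    PolynomialModule R (K.degreeLTPart d) →ₗ[R[X]] PolynomialModule R (K.degreeLTPart (d + 1)) :=
  extend (lsingle R 1 ∘ₗ Submodule.inclusion (K.degreeLTPart_mono d) -
    lsingle R 0 ∘ₗ K.mulXPart d)

/-- The evaluation map from formal polynomials with coefficients in a degree part. -/
noncomputable def Submodule.charEval (d : ℕ) :
    PolynomialModule R (K.degreeLTPart d) →ₗ[R[X]] K :=
  extend { toFun a := ⟨a.1, a.2.1⟩, map_add' _ _ := rfl, map_smul' _ _ := rfl }

theorem Submodule.charEval_single (d k : ℕ) (a : K.degreeLTPart d) :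
    (K.charEval d (single R k a) : ι → R[X]) = (X ^ k : R[X]) • a.1 := by
  rw [charEval, extend_single]; rfl

theorem Submodule.charRel_single (d k : ℕ) (a : K.degreeLTPart d) :
    K.charRel d (single R k a) =
      single R (k + 1) (Submodule.inclusion (K.degreeLTPart_mono d) a) -
        single R k (K.mulXPart d a) := by
  rw [charRel, extend_single, LinearMap.sub_apply, smul_sub]
  simp only [LinearMap.comp_apply, lsingle, ← monomial_one_right_eq_X_pow]
  erw [monomial_smul_single, monomial_smul_single]
  simp

theorem Submodule.charEval_comp_charRel (d : ℕ) (x : PolynomialModule R (K.degreeLTPart d)) :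
    K.charEval (d + 1) (K.charRel d x) = 0 := by
  induction x using PolynomialModule.induction_linear with
  | zero => simp
  | add x y hx hy => rw [map_add, map_add, hx, hy, add_zero]
  | single k a =>
    rw [charRel_single, map_sub]
    ext1
    simp only [AddSubgroupClass.coe_sub, charEval_single]
    simp [mulXPart, pow_succ, smul_smul]

theorem Submodule.coeff_charRel_zero (d : ℕ) (x : PolynomialModule R (K.degreeLTPart d)) :
    (K.charRel d x).coeff 0 = - K.mulXPart d (x.coeff 0) := by
  induction x using PolynomialModule.induction_linear with
  | zero => simp
  | add x y hx hy => simp only [map_add, coeff_add_apply, hx, hy]; abel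
  | single k a =>
    rw [charRel_single]
    simp only [coeff_sub_apply, coeff_single_apply]
    split_ifs <;> simp_all

theorem Submodule.coeff_charRel_succ (d : ℕ) (x : PolynomialModule R (K.degreeLTPart d)) (j : ℕ) :
    (K.charRel d x).coeff (j + 1) =
      Submodule.inclusion (K.degreeLTPart_mono d) (x.coeff j) -
        K.mulXPart d (x.coeff (j + 1)) := by
  induction x using PolynomialModule.induction_linear with
  | zero => simp
  | add x y hx hy => simp only [map_add, coeff_add_apply, hx, hy]; abel
  | single k a =>
    rw [charRel_single]
    simp only [coeff_sub_apply, coeff_single_apply]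
    split_ifs <;> simp_all

theorem Submodule.charRel_injective (d : ℕ) : Function.Injective (K.charRel d) := by
  rw [injective_iff_map_eq_zero]
  intro x hx
  have hmul (a : K.degreeLTPart d) (ha : K.mulXPart d a = 0) : a = 0 := by
    refine Subtype.ext (funext fun i => ?_)
    have h : (X : R[X]) * a.1 i = 0 := congr(($ha : ι → R[X]) i)
    refine Polynomial.ext fun k => ?_
    have := congr(($h).coeff (k + 1))
    rwa [coeff_X_mul] at this
  refine coeff_injective (Finsupp.ext fun j => ?_)
  induction j with
  | zero =>
    have := K.coeff_charRel_zero d x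
    rw [hx] at this
    exact hmul _ (neg_eq_zero.1 this.symm)
  | succ j ih =>
    have := K.coeff_charRel_succ d x j
    rw [hx, ih] at this
    refine hmul _ ?_
    simpa using this.symm

theorem Submodule.charEval_apply (d N : ℕ) (y : PolynomialModule R (K.degreeLTPart d))
    (hy : ∀ k, N ≤ k → y.coeff k = 0) :
    (K.charEval d y : ι → R[X]) = ∑ k ∈ Finset.range N, (X ^ k : R[X]) • (y.coeff k).1 := by
  have h : y = ∑ k ∈ Finset.range N, single R k (y.coeff k) := by
    refine coeff_injective (Finsupp.ext fun j => ?_)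
    rw [PolynomialModule.coeff_sum, Finsupp.finsetSum_apply]
    simp only [coeff_single_apply, Finset.sum_ite_eq', Finset.mem_range]
    split_ifs with hj
    · rfl
    · exact hy j (not_lt.1 hj)
  conv_lhs => rw [h]
  simp [charEval_single]

theorem Submodule.exact_charRel_charEval (d : ℕ) :
    Function.Exact (K.charRel d) (K.charEval (d + 1)) := by
  intro y
  refine ⟨fun hy => ?_, fun ⟨x, hx⟩ => hx ▸ K.charEval_comp_charRel d x⟩
  obtain ⟨N, hN⟩ : ∃ N, ∀ k, N ≤ k → y.coeff k = 0 :=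
    ⟨y.coeff.support.sup id + 1, fun k hk => Finsupp.notMem_support_iff.1 fun h =>
      absurd (Finset.le_sup (f := id) h) (by simp; omega)⟩
  induction N generalizing y with
  | zero =>
    refine ⟨0, ?_⟩
    rw [map_zero]
    exact coeff_injective (Finsupp.ext fun k => (hN k k.zero_le).symm)
  | succ N ih =>
    have hev := K.charEval_apply (d + 1) (N + 1) y hN
    rw [hy] at hev
    rcases N with _ | N
    · have h0 : y.coeff 0 = 0 := by
        refine Subtype.ext ?_
        simpa using hev.symm
      refine ⟨0, ?_⟩
      rw [map_zero]
      refine coeff_injective (Finsupp.ext fun k => ?_)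
      rcases k with _ | k
      · exact h0.symm
      · exact (hN _ (by omega)).symm
    · have hmem : (y.coeff (N + 1)).1 ∈ K.degreeLTPart d := by
        refine ⟨(y.coeff (N + 1)).2.1, fun i k hk => ?_⟩
        rcases hk.eq_or_lt with rfl | hk
        · have h1 := congr(($hev i).coeff (N + 1 + d))
          rw [Finset.sum_range_succ, Pi.add_apply, Polynomial.coeff_add, Finset.sum_apply,
            finsetSum_coeff, Finset.sum_eq_zero, zero_add] at h1
          · simpa [add_comm, coeff_X_pow_mul] using h1.symm
          · intro k hk
            rw [Finset.mem_range] at hk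
            obtain ⟨c, hc⟩ := Nat.exists_eq_add_of_lt hk
            rw [Pi.smul_apply, smul_eq_mul, show N + 1 + d = (d + c + 1) + k by omega,
              coeff_X_pow_mul]
            exact (y.coeff k).2.2 i _ (by omega)
        · exact (y.coeff (N + 1)).2.2 i k hk
      obtain ⟨x, hx⟩ := ih (y - K.charRel d (single R N ⟨_, hmem⟩))
        (by rw [map_sub, hy, charEval_comp_charRel, sub_zero]) (fun k hk => by
          obtain ⟨k, rfl⟩ := Nat.exists_eq_succ_of_ne_zero (Nat.ne_zero_of_lt hk)
          rw [coeff_sub_apply, coeff_charRel_succ, coeff_single_apply, coeff_single_apply]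
          have h2 : N ≠ k + 1 := by omega
          rw [if_neg h2]
          split_ifs with h
          · subst h
            refine Subtype.ext ?_
            simp
          · simp [hN (k + 1) (by omega)])
      exact ⟨x + single R N ⟨_, hmem⟩, by rw [map_add, hx, sub_add_cancel]⟩

theorem Submodule.exists_charEval_surjective [Finite ι] (hK : K.FG) :
    ∃ d, Function.Surjective (K.charEval (d + 1)) := by
  obtain ⟨S, hS⟩ := hK
  have := Fintype.ofFinite ι
  refine ⟨S.sup fun v => Finset.univ.sup fun i => (v i).natDegree, fun x => ?_⟩
  have hx : x.1 ∈ (LinearMap.range (K.charEval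
      ((S.sup fun v => Finset.univ.sup fun i => (v i).natDegree) + 1))).map K.subtype := by
    have hxS : x.1 ∈ Submodule.span R[X] (S : Set (ι → R[X])) := hS ▸ x.2
    refine Submodule.span_le.2 (fun v hv => ?_) hxS
    have hvK : v ∈ K := hS ▸ Submodule.subset_span hv
    refine ⟨⟨v, hvK⟩, ⟨single R 0 ⟨v, hvK, fun i k hk => ?_⟩, ?_⟩, rfl⟩
    · refine coeff_eq_zero_of_natDegree_lt (lt_of_le_of_lt ?_ (Nat.lt_of_succ_le hk))
      exact (Finset.le_sup (f := fun i => (v i).natDegree) (Finset.mem_univ i)).trans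
        (Finset.le_sup (f := fun v => Finset.univ.sup fun i => (v i).natDegree) hv)
    · refine Subtype.ext ?_
      rw [charEval_single]
      simp
  obtain ⟨z, ⟨y, rfl⟩, hz⟩ := hx
  exact ⟨y, Subtype.ext hz⟩

theorem Submodule.exists_hasFiniteFreeResolution [IsNoetherianRing R] [Finite ι]
    (hR : ∀ (M : Type u) [AddCommGroup M] [Module R M] [Module.Finite R M],
      ∃ n, HasFiniteFreeResolution R n M) : ∃ n, HasFiniteFreeResolution R[X] n K := by
  obtain ⟨d, hd⟩ := K.exists_charEval_surjective (IsNoetherian.noetherian K)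
  have := K.finite_degreeLTPart d
  have := K.finite_degreeLTPart (d + 1)
  obtain ⟨n, hn⟩ := hR (K.degreeLTPart d)
  obtain ⟨m, hm⟩ := hR (K.degreeLTPart (d + 1))
  exact ⟨_, .cokernel (K.charRel_injective d) (K.exact_charRel_charEval d) hd
    (hn.mono (le_max_left n m)).polynomialModule (hm.mono (le_max_right n m)).polynomialModule⟩

end DegreeFiltration

theorem Polynomial.exists_hasFiniteFreeResolution {R : Type u} [CommRing R] [IsNoetherianRing R]
    (hR : ∀ (M : Type u) [AddCommGroup M] [Module R M] [Module.Finite R M],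
      ∃ n, HasFiniteFreeResolution R n M) (M : Type u) [AddCommGroup M] [Module R[X] M]
    [Module.Finite R[X] M] : ∃ n, HasFiniteFreeResolution R[X] n M := by
  obtain ⟨m, f, hf⟩ := Module.Finite.exists_fin' R[X] M
  obtain ⟨n, hn⟩ := (LinearMap.ker f).exists_hasFiniteFreeResolution hR
  exact ⟨n + 1, LinearMap.ker f, Fin m → R[X], _, _, _, _, (LinearMap.ker f).subtype, f,
    inferInstance, inferInstance, Subtype.val_injective, fun x => by simp, hf, hn⟩

section UnimodularRows

variable {ι : Type*} [Fintype ι] [DecidableEq ι]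

/-- A congruence `w = f + c • α` between two vectors, both of which have the same ideal-membership
certificate `c` in two coordinates, is realised by a matrix of determinant one. -/
theorem exists_det_eq_one_mulVec_eq_add_smul {A : Type*} [CommRing A] [IsDomain A]
    {i₀ i₁ : ι} (h01 : i₀ ≠ i₁) {c : A} (hc : c ≠ 0) (f α : ι → A) (g₀ g₁ β₀ β₁ : A)
    (h : g₀ * f i₀ + g₁ * f i₁ = c)
    (h' : (g₀ + c * β₀) * (f i₀ + c * α i₀) + (g₁ + c * β₁) * (f i₁ + c * α i₁) = c) :
    ∃ M : Matrix ι ι A, M.det = 1 ∧ M.mulVec f = f + c • α := by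
  let τ : ι → A := β₁ • Pi.single i₀ 1 - β₀ • Pi.single i₁ 1
  let W : Matrix (Fin 2) ι A := ![g₀ • Pi.single i₀ 1 + g₁ • Pi.single i₁ 1,
    f i₁ • Pi.single i₀ 1 - f i₀ • Pi.single i₁ 1]
  let U : Matrix ι (Fin 2) A := Matrix.transpose ![α, τ]
  have hW (u : ι → A) : W.mulVec u =
      ![g₀ * u i₀ + g₁ * u i₁, f i₁ * u i₀ - f i₀ * u i₁] := by
    ext k
    fin_cases k
    · change (g₀ • Pi.single i₀ 1 + g₁ • Pi.single i₁ 1) ⬝ᵥ u = _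
      simp [add_dotProduct]
    · change (f i₁ • Pi.single i₀ 1 - f i₀ • Pi.single i₁ 1) ⬝ᵥ u = _
      simp [sub_dotProduct]
  have hσ : g₀ * α i₀ + g₁ * α i₁ + f i₀ * β₀ + f i₁ * β₁
      + c * (α i₀ * β₀ + α i₁ * β₁) = 0 := by
    apply mul_left_cancel₀ hc
    linear_combination h' - h
  refine ⟨1 + U * W, ?_, ?_⟩
  · rw [Matrix.det_one_add_mul_comm]
    have h1 : W * U = !![g₀ * α i₀ + g₁ * α i₁, g₀ * β₁ - g₁ * β₀;
        f i₁ * α i₀ - f i₀ * α i₁, f i₁ * β₁ + f i₀ * β₀] := by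
      ext a b
      have hb : (W * U) a b = W.mulVec (fun i => U i b) a := rfl
      rw [hb, hW]
      fin_cases a <;> fin_cases b <;>
        simp [U, τ, Matrix.transpose, h01, h01.symm]
      · ring
    rw [h1, Matrix.det_fin_two]
    simp
    linear_combination hσ + (α i₀ * β₀ + α i₁ * β₁) * h
  · rw [Matrix.add_mulVec, Matrix.one_mulVec, ← Matrix.mulVec_mulVec, hW]
    congr 1
    ext i
    simp [Matrix.mulVec, dotProduct, U, Matrix.transpose]
    linear_combination α i * h

theorem exists_comp_add_mul {R : Type*} [CommRing R] (f b d : R[X]) (c : R) :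
    ∃ a : R[X], f.comp (b + C c * d) = f.comp b + C c * a := by
  have h := sub_dvd_eval_sub (b + C c * d) b (f.map C)
  rw [eval_map, eval_map, add_sub_cancel_left] at h
  obtain ⟨e, he⟩ := h
  exact ⟨d * e, by rw [comp, comp, ← mul_assoc, ← he]; ring⟩

theorem exists_det_eq_one_mulVec_comp {R : Type*} [CommRing R] [IsDomain R]
    {i₀ i₁ : ι} (h01 : i₀ ≠ i₁) {c : R} (hc : c ≠ 0) (f : ι → R[X]) (g₀ g₁ b d : R[X])
    (h : g₀ * f i₀ + g₁ * f i₁ = C c) :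
    ∃ M : Matrix ι ι R[X], M.det = 1 ∧
      M.mulVec (fun i => (f i).comp b) = fun i => (f i).comp (b + C c * d) := by
  choose α hα using fun i => exists_comp_add_mul (f i) b d c
  obtain ⟨β₀, h₀⟩ := exists_comp_add_mul g₀ b d c
  obtain ⟨β₁, h₁⟩ := exists_comp_add_mul g₁ b d c
  obtain ⟨M, hM, hMf⟩ := exists_det_eq_one_mulVec_eq_add_smul h01 (C_ne_zero.2 hc)
    (fun i => (f i).comp b) α (g₀.comp b) (g₁.comp b) β₀ β₁
    (by simpa using congrArg (fun q => q.comp b) h)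
    (by simpa [← hα, ← h₀, ← h₁] using congrArg (fun q => q.comp (b + C c * d)) h)
  refine ⟨M, hM, hMf.trans ?_⟩
  ext1 i
  simp [hα]

/-- `w` is obtained from `v` by a matrix of determinant one which lifts along `ψ`. -/
def LiftableOrbit {R S : Type*} [CommRing R] [CommRing S] (ψ : R →+* S) (v w : ι → S) : Prop :=
  ∃ M : Matrix ι ι R, M.det = 1 ∧ (M.map ψ).mulVec v = w

namespace LiftableOrbit

variable {R S : Type*} [CommRing R] [CommRing S] {ψ : R →+* S}

theorem refl (v : ι → S) : LiftableOrbit ψ v v := ⟨1, by simp, by simp⟩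

theorem symm {v w : ι → S} : LiftableOrbit ψ v w → LiftableOrbit ψ w v := by
  rintro ⟨M, hM, rfl⟩
  refine ⟨M.adjugate, by rw [Matrix.det_adjugate, hM, one_pow], ?_⟩
  rw [Matrix.mulVec_mulVec, ← Matrix.map_mul, Matrix.adjugate_mul, hM]
  simp

theorem trans {v w x : ι → S} : LiftableOrbit ψ v w → LiftableOrbit ψ w x →
    LiftableOrbit ψ v x := by
  rintro ⟨M, hM, rfl⟩ ⟨N, hN, rfl⟩
  exact ⟨N * M, by simp [hM, hN], by rw [Matrix.map_mul, Matrix.mulVec_mulVec]⟩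

/-- Adding multiples of the other entries to the entry `i`. -/
theorem update_add (hψ : Function.Surjective ψ) (v : ι → S) (i : ι) (a : ι → S) (ha : a i = 0) :
    LiftableOrbit ψ v (Function.update v i (v i + dotProduct a v)) := by
  choose b hb using fun j => hψ (a j)
  let b' := Function.update b i 0
  have hb' : ψ ∘ b' = a := by
    ext j
    by_cases h : j = i
    · subst h; simp [b', ha]
    · simp [b', h, hb]
  refine ⟨1 + Matrix.vecMulVec (Pi.single i 1) b', ?_, ?_⟩
  · rw [Matrix.vecMulVec_eq Unit, Matrix.det_one_add_replicateCol_mul_replicateRow]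
    simp [b']
  · have : ((1 : Matrix ι ι R) + Matrix.vecMulVec (Pi.single i 1) b').map ψ =
        1 + Matrix.vecMulVec (Pi.single i 1) a := by
      rw [Matrix.map_add _ (map_add ψ), Matrix.map_one _ (map_zero ψ) (map_one ψ)]
      congr 1
      ext j k
      simp [Matrix.vecMulVec_apply, ← hb', Pi.single_apply, apply_ite ψ]
    rw [this, Matrix.add_mulVec, Matrix.one_mulVec, Matrix.vecMulVec_mulVec]
    ext j
    by_cases h : j = i
    · subst h; simp
    · simp [h]

/-- Adding multiples of the entry `i` to the other entries. -/
theorem add_smul (hψ : Function.Surjective ψ) (v : ι → S) (i : ι) (a : ι → S) (ha : a i = 0) :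
    LiftableOrbit ψ v (v + v i • a) := by
  choose b hb using fun j => hψ (a j)
  let b' := Function.update b i 0
  have hb' : ψ ∘ b' = a := by
    ext j
    by_cases h : j = i
    · subst h; simp [b', ha]
    · simp [b', h, hb]
  refine ⟨1 + Matrix.vecMulVec b' (Pi.single i 1), ?_, ?_⟩
  · rw [Matrix.vecMulVec_eq Unit, Matrix.det_one_add_replicateCol_mul_replicateRow]
    simp [b']
  · have : ((1 : Matrix ι ι R) + Matrix.vecMulVec b' (Pi.single i 1)).map ψ =
        1 + Matrix.vecMulVec a (Pi.single i 1) := by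
      rw [Matrix.map_add _ (map_add ψ), Matrix.map_one _ (map_zero ψ) (map_one ψ)]
      congr 1
      ext j k
      simp [Matrix.vecMulVec_apply, ← hb', Pi.single_apply, apply_ite ψ]
    rw [this, Matrix.add_mulVec, Matrix.one_mulVec, Matrix.vecMulVec_mulVec]
    ext j
    simp [mul_comm]

/-- Transport along compatible ring homomorphisms. -/
theorem map {R' S' : Type*} [CommRing R'] [CommRing S'] {ψ' : R' →+* S'} {v w : ι → S}
    (h : LiftableOrbit ψ v w) (ρ : R →+* R') (σ : S →+* S')
    (hcomm : ψ'.comp ρ = σ.comp ψ) : LiftableOrbit ψ' (σ ∘ v) (σ ∘ w) := by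
  obtain ⟨M, hM, rfl⟩ := h
  refine ⟨M.map ρ, ?_, ?_⟩
  · have := RingHom.map_det ρ M
    rw [hM, map_one] at this
    exact this.symm
  · have h1 : (M.map ρ).map ψ' = (M.map ψ).map σ := by
      ext a b
      simpa using RingHom.congr_fun hcomm (M a b)
    rw [h1]
    ext a
    exact (RingHom.map_mulVec σ (M.map ψ) v a).symm

theorem span_range_eq_top {v w : ι → S} (h : LiftableOrbit ψ v w)
    (hv : Ideal.span (Set.range v) = ⊤) : Ideal.span (Set.range w) = ⊤ := by
  obtain ⟨M, hM, rfl⟩ := h.symm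
  rw [eq_top_iff, ← hv, Ideal.span_le]
  rintro _ ⟨i, rfl⟩
  exact Ideal.sum_mem _ fun j _ => Ideal.mul_mem_left _ _ (Ideal.subset_span ⟨j, rfl⟩)

/-- Over a field every nonzero vector is in the orbit of a unit vector. -/
theorem single_of_field {k : Type*} [Field k] {ψ : R →+* k} (hψ : Function.Surjective ψ)
    {i₀ i₁ : ι} (h01 : i₀ ≠ i₁) (v : ι → k) (hv : v ≠ 0) :
    LiftableOrbit ψ v (Pi.single i₀ 1) := by
  have key : ∀ w : ι → k, (∃ j ≠ i₀, w j ≠ 0) → LiftableOrbit ψ w (Pi.single i₀ 1) := by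
    rintro w ⟨j, hj, hwj⟩
    have h1 := update_add hψ w i₀ (Pi.single j ((1 - w i₀) / w j)) (by simp [hj.symm])
    refine h1.trans ?_
    have e : w i₀ + dotProduct (Pi.single j ((1 - w i₀) / w j)) w = 1 := by
      simp; field_simp; ring
    rw [e]
    have h2 := add_smul hψ (Function.update w i₀ 1) i₀ (- Function.update w i₀ 0) (by simp)
    convert h2 using 1
    ext a
    by_cases h : a = i₀
    · subst h; simp
    · simp [h]
  by_cases h : ∃ j ≠ i₀, v j ≠ 0
  · exact key v h
  · push Not at h
    have h0 : v i₀ ≠ 0 := by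
      intro h0
      apply hv
      ext j
      by_cases hj : j = i₀
      · rw [hj, h0]; rfl
      · exact h j hj
    refine (add_smul hψ v i₀ (Pi.single i₁ 1) (by simp [h01])).trans (key _ ⟨i₁, h01.symm, ?_⟩)
    simp [h i₁ h01.symm, h0]

end LiftableOrbit

end UnimodularRows

theorem exists_isCoprime_add_mul {D : Type*} [CommRing D] [IsDomain D] [IsPrincipalIdealRing D]
    {a b c x y : D} (ha : a ≠ 0) (h : x * a + y * b + c = 1) :
    ∃ z, IsCoprime a (b + z * c) := by
  classical
  let t := ((UniqueFactorizationMonoid.factors a).filter fun q => ¬ q ∣ b).prod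
  refine ⟨t, isCoprime_of_prime_dvd (fun h0 => ha h0.1) fun q hq hqa hqb => ?_⟩
  by_cases hb : q ∣ b
  · have hqt : ¬ q ∣ t := by
      intro hqt
      obtain ⟨q', hq', hqq'⟩ := hq.exists_mem_multiset_dvd hqt
      rw [Multiset.mem_filter] at hq'
      have hass : Associated q q' := hq.irreducible.associated_of_dvd
        (UniqueFactorizationMonoid.irreducible_of_factor _ hq'.1) hqq'
      exact hq'.2 (hass.symm.dvd.trans hb)
    have hc : q ∣ c := (hq.dvd_or_dvd ((dvd_add_right hb).1 hqb)).resolve_left hqt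
    exact hq.not_dvd_one (h ▸ dvd_add (dvd_add (hqa.mul_left _) (hb.mul_left _)) hc)
  · obtain ⟨q', hq', hqq'⟩ := UniqueFactorizationMonoid.exists_mem_factors_of_dvd ha
      hq.irreducible hqa
    have hqt : q ∣ t := hqq'.dvd.trans (Multiset.dvd_prod
      (Multiset.mem_filter.2 ⟨hq', fun h' => hb (hqq'.dvd.trans h')⟩))
    exact hb ((dvd_add_left (hqt.mul_right c)).1 hqb)

namespace LiftableOrbit

variable {ι : Type*} [Fintype ι] [DecidableEq ι]
variable {R S : Type*} [CommRing R] [CommRing S] {ψ : R →+* S}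

theorem comp_right (hψ : Function.Surjective ψ) {v w : ι → S[X]}
    (h : LiftableOrbit (mapRingHom ψ) v w) (b : S[X]) :
    LiftableOrbit (mapRingHom ψ) (fun i => (v i).comp b) (fun i => (w i).comp b) := by
  obtain ⟨b, rfl⟩ := map_surjective ψ hψ b
  refine h.map (compRingHom b) (compRingHom (b.map ψ)) ?_
  ext x <;> simp

/-- Away from any maximal ideal there is a scalar `c` such that evaluations of `v` at arguments
congruent modulo `c` lie in the same orbit. -/
theorem exists_notMem_comp [IsDomain R] (hψ : Function.Surjective ψ) {i₀ i₁ : ι} (h01 : i₀ ≠ i₁)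
    (v : ι → S[X]) (hv : Ideal.span (Set.range v) = ⊤) (hlead : IsUnit (v i₀).leadingCoeff)
    (m : Ideal S) [m.IsMaximal] :
    ∃ c ∉ m, ∀ b d : S[X], LiftableOrbit (mapRingHom ψ) (fun i => (v i).comp b)
      (fun i => (v i).comp (b + C c * d)) := by
  let _ : Field (S ⧸ m) := Ideal.Quotient.field m
  let q : S →+* S ⧸ m := Ideal.Quotient.mk m
  have hq : Function.Surjective q := Ideal.Quotient.mk_surjective
  have ha : (v i₀).map q ≠ 0 := by
    intro h0
    have := leadingCoeff_map_of_leadingCoeff_ne_zero q (hlead.map q).ne_zero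
    rw [h0, leadingCoeff_zero] at this
    exact (hlead.map q).ne_zero this.symm
  obtain ⟨x, hx⟩ : ∃ x : ι → S[X], ∑ i, x i * v i = 1 := by
    have h1 : (1 : S[X]) ∈ Ideal.span (Set.range v) := hv ▸ Submodule.mem_top
    exact (Ideal.mem_span_range_iff_exists_fun).1 h1
  let x' : ι → S[X] := Function.update (Function.update x i₀ 0) i₁ 0
  have hx' : x i₀ * v i₀ + x i₁ * v i₁ + x' ⬝ᵥ v = 1 := by
    have e : x = x' + Pi.single i₀ (x i₀) + Pi.single i₁ (x i₁) := by
      ext1 j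
      by_cases h1 : j = i₁
      · subst h1; simp [x', h01.symm]
      · by_cases h0 : j = i₀
        · subst h0; simp [x', h01]
        · simp [x', h0, h1]
    have e2 : x ⬝ᵥ v = 1 := hx
    nth_rewrite 1 [e] at e2
    simp only [add_dotProduct, single_dotProduct] at e2
    rw [← e2]; ring
  obtain ⟨z, hz⟩ := exists_isCoprime_add_mul (a := (v i₀).map q) (b := (v i₁).map q)
    (c := (x' ⬝ᵥ v).map q) (x := (x i₀).map q) (y := (x i₁).map q) ha (by
      rw [← Polynomial.map_mul, ← Polynomial.map_mul, ← Polynomial.map_add, ← Polynomial.map_add,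
        hx', Polynomial.map_one])
  obtain ⟨z, rfl⟩ := map_surjective q hq z
  let w : ι → S[X] := Function.update v i₁ (v i₁ + (z • x') ⬝ᵥ v)
  have hvw : LiftableOrbit (mapRingHom ψ) v w :=
    update_add (map_surjective ψ hψ) v i₁ (z • x') (by simp [x'])
  have hw0 : w i₀ = v i₀ := by simp [w, h01]
  have hcop : IsCoprime ((w i₀).map q) ((w i₁).map q) := by
    rw [hw0]
    simpa [w] using hz
  choose f hf hfdeg using fun i => exists_natDegree_eq_of_mem_lifts
    (mem_lifts_of_surjective (f := ψ) hψ (w i))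
  let d₀ := (f i₀).natDegree
  let e₀ := (f i₁).natDegree + 1
  let c := (f i₀).resultant (f i₁) d₀ e₀
  have hqc : q (ψ c) ≠ 0 := by
    rw [← resultant_map_map, ← resultant_map_map, hf, hf]
    have hd : d₀ = ((w i₀).map q).natDegree := by
      rw [natDegree_map_eq_of_isUnit_leadingCoeff q (hw0 ▸ hlead), ← hfdeg]
    have he : ((w i₁).map q).natDegree ≤ e₀ := by
      refine natDegree_map_le.trans ?_
      rw [← hfdeg]
      exact Nat.le_succ _
    obtain ⟨k, hk⟩ := Nat.exists_eq_add_of_le he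
    rw [hk, hd, resultant_add_right_deg _ _ _ _ _ le_rfl]
    refine mul_ne_zero (pow_ne_zero _ ?_) (resultant_ne_zero _ _ hcop)
    rw [coeff_natDegree, hw0]
    exact leadingCoeff_ne_zero.2 ha
  have hc0 : c ≠ 0 := fun h => hqc (by rw [h, map_zero, map_zero])
  refine ⟨ψ c, fun hmem => hqc (Ideal.Quotient.eq_zero_iff_mem.2 hmem), fun b d => ?_⟩
  refine ((hvw.comp_right hψ b).trans ?_).trans (hvw.comp_right hψ _).symm
  obtain ⟨b, rfl⟩ := map_surjective ψ hψ b
  obtain ⟨d, rfl⟩ := map_surjective ψ hψ d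
  obtain ⟨g₀, g₁, -, -, hg⟩ := exists_mul_add_mul_eq_C_resultant (m := d₀) (n := e₀)
    (f i₀) (f i₁) le_rfl (Nat.le_succ _) (Or.inr (Nat.succ_ne_zero _))
  obtain ⟨M, hM, hMf⟩ := exists_det_eq_one_mulVec_comp h01 hc0 f g₀ g₁ b d
    (by rw [← hg]; ring)
  refine ⟨M, hM, ?_⟩
  ext1 i
  have := congrArg (mapRingHom ψ) (congrFun hMf i)
  rw [RingHom.map_mulVec] at this
  simpa [Function.comp_def, Polynomial.map_comp, hf] using this

/-- A unimodular vector of polynomials one of whose entries has invertible leading coefficient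
is in the orbit of its value at zero. -/
theorem eval_zero [IsDomain R] (hψ : Function.Surjective ψ) {i₀ i₁ : ι} (h01 : i₀ ≠ i₁)
    (v : ι → S[X]) (hv : Ideal.span (Set.range v) = ⊤) (hlead : IsUnit (v i₀).leadingCoeff) :
    LiftableOrbit (mapRingHom ψ) v (fun i => C ((v i).eval 0)) := by
  let J : Ideal S :=
    { carrier := {c | ∀ b d : S[X], LiftableOrbit (mapRingHom ψ) (fun i => (v i).comp b)
        (fun i => (v i).comp (b + C c * d))}
      zero_mem' := fun b d => by simpa using refl _
      add_mem' := fun {c c'} hc hc' b d => by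
        refine (hc b d).trans ?_
        simpa [add_mul, add_assoc] using hc' (b + C c * d) d
      smul_mem' := fun s c hc b d => by
        have := hc b (C s * d)
        rwa [← mul_assoc, ← C_mul, mul_comm c s] at this }
  have hJ : (1 : S) ∈ J := by
    rw [← Ideal.eq_top_iff_one]
    by_contra hne
    obtain ⟨m, hm, hJm⟩ := Ideal.exists_le_maximal J hne
    obtain ⟨c, hcm, hc⟩ := exists_notMem_comp hψ h01 v hv hlead m
    exact hcm (hJm hc)
  simpa using hJ X (-X)

end LiftableOrbit

namespace MvPolynomial

open Polynomial

section Shear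

variable {R : Type*} [CommRing R] {n : ℕ}

/-- The substitution `X i ↦ X i + c * X 0 ^ N ^ i` for `i ≠ 0`, fixing `X 0`. -/
noncomputable def shear (N : ℕ) (c : R) :
    MvPolynomial (Fin (n + 1)) R →ₐ[R] MvPolynomial (Fin (n + 1)) R :=
  aeval fun i => if i = 0 then X 0 else X i + C c * X 0 ^ N ^ (i : ℕ)

theorem shear_X_zero (N : ℕ) (c : R) : shear (n := n) N c (X 0) = X 0 := by simp [shear]

theorem shear_X_succ (N : ℕ) (c : R) (i : Fin n) :
    shear N c (X i.succ) = X i.succ + C c * X 0 ^ N ^ ((i : ℕ) + 1) := by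
  simp [shear]

theorem shear_neg_shear (N : ℕ) (c : R) (f : MvPolynomial (Fin (n + 1)) R) :
    shear N (-c) (shear N c f) = f := by
  induction f using MvPolynomial.induction_on with
  | C a => simp
  | add p q hp hq => simp [hp, hq]
  | mul_X p i hp =>
    rw [map_mul, map_mul, hp]
    cases i using Fin.cases <;> simp [shear_X_zero, shear_X_succ]

theorem map_shear {S : Type*} [CommRing S] (φ : R →+* S) (N : ℕ) (c : R)
    (f : MvPolynomial (Fin (n + 1)) R) : map φ (shear N c f) = shear N (φ c) (map φ f) := by
  induction f using MvPolynomial.induction_on with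
  | C a => simp
  | add p q hp hq => simp [hp, hq]
  | mul_X p i hp =>
    rw [map_mul, map_mul, map_mul, map_mul, hp]
    cases i using Fin.cases <;> simp [shear_X_zero, shear_X_succ]

theorem map_finSuccEquiv {S : Type*} [CommRing S] (φ : R →+* S)
    (f : MvPolynomial (Fin (n + 1)) R) :
    (finSuccEquiv R n f).map (map φ) = finSuccEquiv S n (map φ f) := by
  induction f using MvPolynomial.induction_on with
  | C a => simp [finSuccEquiv_apply]
  | add p q hp hq => simp [hp, hq]
  | mul_X p i hp =>
    rw [map_mul, map_mul, map_mul, Polynomial.map_mul, hp]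
    cases i using Fin.cases <;> simp [finSuccEquiv_X_zero, finSuccEquiv_X_succ]

variable [IsDomain R]

theorem sum_pow_mul_injOn {N : ℕ} {v w : Fin (n + 1) →₀ ℕ} (hN : 1 < N) (hv : ∀ i, v i < N)
    (hw : ∀ i, w i < N)
    (h : ∑ x : Fin (n + 1), N ^ (x : ℕ) * v x = ∑ x : Fin (n + 1), N ^ (x : ℕ) * w x) : v = w := by
  refine Finsupp.ext <| congrFun <| List.ofFn_inj.mp ?_
  apply Nat.ofDigits_inj_of_len_eq hN (by simp) (by grind) (by grind)
  simpa only [Nat.ofDigits_eq_sum_mapIdx, List.mapIdx_eq_ofFn, List.get_ofFn, List.length_ofFn,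
    Fin.val_cast, mul_comm, List.sum_ofFn] using! h

theorem finSuccEquiv_shear_X (N : ℕ) (hN : 1 < N) (i : Fin (n + 1)) :
    (finSuccEquiv R n (shear N 1 (X i))).natDegree = N ^ (i : ℕ) ∧
      (finSuccEquiv R n (shear N 1 (X i))).leadingCoeff = 1 := by
  cases i using Fin.cases with
  | zero => simp [shear_X_zero, finSuccEquiv_X_zero]
  | succ i =>
    have : finSuccEquiv R n (shear N 1 (X i.succ)) =
        Polynomial.X ^ N ^ ((i : ℕ) + 1) + Polynomial.C (X i) := by
      simp [shear_X_succ, finSuccEquiv_X_zero, finSuccEquiv_X_succ, add_comm]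
    rw [this]
    refine ⟨by rw [natDegree_X_pow_add_C]; simp, leadingCoeff_X_pow_add_C (by positivity)⟩

theorem finSuccEquiv_shear_monomial (N : ℕ) (hN : 1 < N) (v : Fin (n + 1) →₀ ℕ) {a : R}
    (ha : a ≠ 0) :
    (finSuccEquiv R n (shear N 1 (monomial v a))).natDegree =
        ∑ i : Fin (n + 1), N ^ (i : ℕ) * v i ∧
      (finSuccEquiv R n (shear N 1 (monomial v a))).leadingCoeff = C a := by
  have e : finSuccEquiv R n (shear N 1 (monomial v a)) = Polynomial.C (C a) *
      ∏ i, finSuccEquiv R n (shear N 1 (X i)) ^ v i := by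
    rw [monomial_eq, Finsupp.prod_pow v fun a => X a]
    simp only [map_mul, map_prod, map_pow]
    congr 1
    rw [← algebraMap_eq, AlgHom.commutes, AlgEquiv.commutes]
    rfl
  have hne (i : Fin (n + 1)) : finSuccEquiv R n (shear N 1 (X i)) ≠ 0 := by
    rw [← leadingCoeff_ne_zero, (finSuccEquiv_shear_X N hN i).2]
    exact one_ne_zero
  rw [e]
  constructor
  · rw [natDegree_C_mul (by simpa using ha), natDegree_prod _ _ fun i _ => pow_ne_zero _ (hne i)]
    simp [natDegree_pow, (finSuccEquiv_shear_X N hN _).1, mul_comm]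
  · simp [leadingCoeff_mul, leadingCoeff_prod, (finSuccEquiv_shear_X N hN _).2]

theorem isUnit_leadingCoeff_finSuccEquiv_shear {k : Type*} [Field k]
    (f : MvPolynomial (Fin (n + 1)) k) (hf : f ≠ 0) :
    IsUnit (finSuccEquiv k n (shear (2 + f.totalDegree) 1 f)).leadingCoeff := by
  set N := 2 + f.totalDegree with hN
  have hN1 : 1 < N := by omega
  let g : (Fin (n + 1) →₀ ℕ) → Polynomial (MvPolynomial (Fin n) k) :=
    fun v => finSuccEquiv k n (shear N 1 (monomial v (coeff v f)))
  have hg (v) (hv : v ∈ f.support) := finSuccEquiv_shear_monomial N hN1 v (mem_support_iff.1 hv)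
  have hlt (v) (hv : v ∈ f.support) (i) : v i < N :=
    lt_of_le_of_lt ((monomial_le_degreeOf i hv).trans (degreeOf_le_totalDegree f i)) (by lia)
  obtain ⟨v, hv, hmax⟩ := Finset.exists_max_image f.support (fun v => (g v).natDegree)
    (support_nonempty.mpr hf)
  have hgv : (g v).leadingCoeff = C (coeff v f) := (hg v hv).2
  have hgv0 : g v ≠ 0 := by
    rw [← leadingCoeff_ne_zero, hgv]
    simpa using hv
  have e : finSuccEquiv k n (shear N 1 f) = (∑ w ∈ f.support \ {v}, g w) + g v := by
    conv_lhs => rw [← f.support_sum_monomial_coeff]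
    rw [map_sum, map_sum, add_comm (∑ w ∈ _, g w)]
    exact Finset.sum_eq_add_sum_sdiff_singleton_of_mem hv g
  rw [e, leadingCoeff_add_of_degree_lt, hgv]
  · exact (mem_support_iff.mp hv).isUnit.map C
  · refine (degree_sum_le _ _).trans_lt
      ((Finset.sup_lt_iff (Ne.bot_lt fun h => hgv0 (degree_eq_bot.mp h))).mpr fun w hw => ?_)
    obtain ⟨hw, hwv⟩ := Finset.mem_sdiff.mp hw
    refine degree_lt_degree (lt_of_le_of_ne (hmax w hw) fun h => hwv ?_)
    rw [(hg w hw).1, (hg v hv).1] at h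
    rw [Finset.mem_singleton]
    exact sum_pow_mul_injOn hN1 (hlt w hw) (hlt v hv) h

end Shear

/-- Unimodular vectors with at least two entries over a polynomial ring over a field can be
transformed into a unit vector by matrices of determinant one which lift along any given
surjection of the coefficient ring. -/
theorem liftableOrbit_single {O k : Type*} [CommRing O] [IsDomain O] [Field k] (φ : O →+* k)
    (hφ : Function.Surjective φ) {ι : Type*} [Fintype ι] [DecidableEq ι] {i₀ i₁ : ι}
    (h01 : i₀ ≠ i₁) (n : ℕ) (v : ι → MvPolynomial (Fin n) k)
    (hv : Ideal.span (Set.range v) = ⊤) :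
    LiftableOrbit (map φ) v (Pi.single i₀ 1) := by
  induction n with
  | zero =>
    have h := LiftableOrbit.single_of_field hφ h01 (isEmptyRingEquiv k (Fin 0) ∘ v) (by
      intro h0
      have : v = 0 := by
        ext1 i
        exact (map_eq_zero_iff _ (isEmptyRingEquiv k (Fin 0)).injective).1 (congrFun h0 i)
      rw [this] at hv
      have h1 : Ideal.span (Set.range (0 : ι → MvPolynomial (Fin 0) k)) = ⊥ := by
        rw [Ideal.span_eq_bot]
        rintro _ ⟨i, rfl⟩
        rfl
      exact bot_ne_top (h1.symm.trans hv))
    have h' := h.map (ψ' := map φ) (C (σ := Fin 0)) (C (σ := Fin 0)) (by ext x; simp)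
    convert h' using 1
    · ext1 i
      exact ((isEmptyRingEquiv k (Fin 0)).symm_apply_apply (v i)).symm
    · ext1 i
      simp [Pi.single_apply, apply_ite]
  | succ n ih =>
    have key : ∀ v : ι → MvPolynomial (Fin (n + 1)) k, Ideal.span (Set.range v) = ⊤ →
        v i₀ ≠ 0 → LiftableOrbit (map φ) v (Pi.single i₀ 1) := by
      intro v hv h0
      set N := 2 + (v i₀).totalDegree
      let σ : MvPolynomial (Fin (n + 1)) k →+* Polynomial (MvPolynomial (Fin n) k) :=
        (finSuccEquiv k n : _ →+* _).comp (shear N 1).toRingHom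
      let σ' : Polynomial (MvPolynomial (Fin n) k) →+* MvPolynomial (Fin (n + 1)) k :=
        (shear N (-1)).toRingHom.comp ((finSuccEquiv k n).symm : _ →+* _)
      let ρ' : Polynomial (MvPolynomial (Fin n) O) →+* MvPolynomial (Fin (n + 1)) O :=
        (shear N (-1)).toRingHom.comp ((finSuccEquiv O n).symm : _ →+* _)
      have hσ (x) : σ' (σ x) = x := by simp [σ, σ', shear_neg_shear]
      have hcomm : (map φ).comp ρ' = σ'.comp (Polynomial.mapRingHom (map φ)) := by
        refine RingHom.ext fun x => ?_
        obtain ⟨y, rfl⟩ := (finSuccEquiv O n).surjective x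
        simp [ρ', σ', map_shear, map_finSuccEquiv]
      have hw : Ideal.span (Set.range (σ ∘ v)) = ⊤ := by
        rw [Set.range_comp, ← Ideal.map_span, hv, Ideal.map_top]
      have h1 := LiftableOrbit.eval_zero (map_surjective φ hφ) h01 (σ ∘ v) hw
        (isUnit_leadingCoeff_finSuccEquiv_shear (v i₀) h0)
      have h2 := ih (fun i => ((σ ∘ v) i).eval 0) (by
        have := congrArg (Ideal.map (Polynomial.evalRingHom 0)) hw
        rw [Ideal.map_top, Ideal.map_span, ← Set.range_comp] at this
        exact this)
      have h3 := h2.map (ψ' := Polynomial.mapRingHom (map φ)) Polynomial.C Polynomial.C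
        (RingHom.ext fun x => by simp)
      have h4 := (h1.trans h3).map (ψ' := map φ) ρ' σ' hcomm
      convert h4 using 1
      · ext1 i
        exact (hσ (v i)).symm
      · ext1 i
        simp [Pi.single_apply, apply_ite]
    by_cases h0 : v i₀ = 0
    · obtain ⟨j, hj⟩ : ∃ j, v j ≠ 0 := by
        by_contra! h
        have h1 : Ideal.span (Set.range v) = ⊥ := by
          rw [Ideal.span_eq_bot]
          rintro _ ⟨i, rfl⟩
          exact h i
        exact bot_ne_top (h1.symm.trans hv)
      have hji : i₀ ≠ j := by rintro rfl; exact hj h0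
      have h1 := LiftableOrbit.update_add (map_surjective φ hφ) v i₀ (Pi.single j 1)
        (by simp [hji])
      refine h1.trans (key _ (h1.span_range_eq_top hv) ?_)
      simpa [h0] using hj
    · exact key v hv h0

end MvPolynomial

/-- Every unimodular vector can be completed to an invertible matrix. -/
def IsHermiteRing (R : Type*) [CommRing R] : Prop :=
  ∀ (l : ℕ) (w : Fin (l + 1) → R), Ideal.span (Set.range w) = ⊤ →
    ∃ W : Matrix (Fin (l + 1)) (Fin (l + 1)) R, IsUnit W.det ∧ W *ᵥ w = Pi.single 0 1

/-- Finitely generated projective modules are free. -/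
def ProjectivesAreFree (R : Type u) [CommRing R] : Prop :=
  ∀ (M : Type u) [AddCommGroup M] [Module R M] [Module.Finite R M] [Module.Projective R M],
    Module.Free R M

/-- Finitely generated modules have finite free resolutions. -/
def HasFiniteFreeResolutions (R : Type u) [CommRing R] : Prop :=
  ∀ (M : Type u) [AddCommGroup M] [Module R M] [Module.Finite R M],
    ∃ n, HasFiniteFreeResolution R n M

namespace IsHermiteRing

variable {R : Type*} [CommRing R]

theorem of_ringEquiv {S : Type*} [CommRing S] (h : IsHermiteRing R) (e : R ≃+* S) :
    IsHermiteRing S := by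
  intro l w hw
  obtain ⟨W, hW, hWw⟩ := h l (e.symm ∘ w) (by
    rw [Set.range_comp, ← RingEquiv.coe_toRingHom, ← Ideal.map_span, hw, Ideal.map_top])
  refine ⟨W.map e, ?_, ?_⟩
  · have := hW.map e.toRingHom
    rw [RingHom.map_det] at this
    exact this
  · ext1 i
    have h1 := congrArg e (congrFun hWw i)
    have h2 := RingHom.map_mulVec e.toRingHom W (e.symm ∘ w) i
    have h3 : e.toRingHom ∘ (e.symm ∘ w) = w := by ext; simp
    rw [h3] at h2
    refine h2.symm.trans (h1.trans ?_)
    simp [Pi.single_apply, apply_ite e]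

theorem free_of_free_prod_self (h : IsHermiteRing R) {M : Type*} [AddCommGroup M] [Module R M]
    [Module.Finite R M] [Module.Free R (M × R)] : Module.Free R M := by
  obtain _ | _ := subsingleton_or_nontrivial R
  · exact Module.Free.of_subsingleton' R M
  let b := Module.Free.chooseBasis R (M × R)
  obtain ⟨l, ⟨e₀⟩⟩ : ∃ l, Nonempty ((M × R) ≃ₗ[R] (Fin l → R)) :=
    ⟨_, ⟨(b.reindex (Fintype.equivFin _)).equivFun⟩⟩
  obtain _ | l := l
  · have : (0, 1) = (0 : M × R) := e₀.injective (Subsingleton.elim _ _)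
    exact absurd (congrArg Prod.snd this) one_ne_zero
  let w := e₀ (0, 1)
  have hw : Ideal.span (Set.range w) = ⊤ := by
    rw [Ideal.eq_top_iff_one, Ideal.mem_span_range_iff_exists_fun]
    refine ⟨fun i => (e₀.symm (Pi.single i 1)).2, ?_⟩
    have h1 : (e₀.symm w).2 = 1 := by simp [w]
    have h2 : w = ∑ i, w i • Pi.single i (1 : R) := by
      ext j
      simp [Finset.sum_apply, Pi.single_apply]
    conv_rhs => rw [← h1, h2, map_sum, Prod.snd_sum]
    simp [mul_comm]
  obtain ⟨W, hW, hWw⟩ := h l w hw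
  let e : (M × R) ≃ₗ[R] (Fin (l + 1) → R) :=
    e₀.trans (Matrix.toLinearEquiv' W (W.invertibleOfIsUnitDet hW))
  have he : e (0, 1) = Pi.single 0 1 := by
    exact hWw
  have he' : e.symm (Pi.single 0 1) = (0, 1) := by rw [← he, e.symm_apply_apply]
  let f : M →ₗ[R] (Fin l → R) :=
    (LinearMap.funLeft R R Fin.succ) ∘ₗ e.toLinearMap ∘ₗ LinearMap.inl R M R
  have hf : Function.Bijective f := by
    constructor
    · rw [injective_iff_map_eq_zero]
      intro m hm
      have h1 : e (m, 0) = e (m, 0) 0 • Pi.single 0 1 := by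
        ext i
        cases i using Fin.cases with
        | zero => simp
        | succ i =>
          have hi : e (m, 0) i.succ = 0 := congrFun hm i
          simp [hi]
      have h2 := congrArg e.symm h1
      rw [map_smul, he', e.symm_apply_apply] at h2
      simpa using congrArg Prod.fst h2
    · intro x
      refine ⟨(e.symm (Fin.cons 0 x)).1, ?_⟩
      have h1 : ((e.symm (Fin.cons 0 x)).1, (0 : R)) =
          e.symm (Fin.cons 0 x) - (e.symm (Fin.cons 0 x)).2 • (0, 1) := by
        ext <;> simp
      ext i
      change e ((e.symm (Fin.cons 0 x)).1, (0 : R)) i.succ = x i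
      rw [h1, map_sub, map_smul, he]
      simp
  exact Module.Free.of_equiv (LinearEquiv.ofBijective f hf).symm

theorem free_of_isStablyFree (h : IsHermiteRing R) (M : Type*) [AddCommGroup M] [Module R M]
    [Module.Finite R M] [Module.IsStablyFree R M] : Module.Free R M := by
  obtain _ | _ := subsingleton_or_nontrivial R
  · exact Module.Free.of_subsingleton' R M
  obtain ⟨N, _, _, _, _, hN⟩ := Module.IsStablyFree.exist_free_prod R M
  have hfree : ∀ a : ℕ, Module.Free R (M × (Fin a → R)) → Module.Free R M := by
    intro a
    induction a with
    | zero =>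
      exact fun _ => Module.Free.of_equiv
        (LinearEquiv.prodUnique : (M × (Fin 0 → R)) ≃ₗ[R] M)
    | succ a ih =>
      intro ha
      let e : (M × (Fin (a + 1) → R)) ≃ₗ[R] ((M × (Fin a → R)) × R) :=
        ((LinearEquiv.refl R M).prodCongr
          ((Fin.consLinearEquiv R (fun _ => R)).symm.trans (LinearEquiv.prodComm R _ _))).trans
          (LinearEquiv.prodAssoc R _ _ _).symm
      have := Module.Free.of_equiv e
      exact ih h.free_of_free_prod_self
  exact hfree _ (Module.Free.of_equiv
    ((LinearEquiv.refl R M).prodCongr (Module.finBasis R N).equivFun))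

end IsHermiteRing

theorem ProjectivesAreFree.of_ringEquiv {R S : Type u} [CommRing R] [CommRing S]
    (h : ProjectivesAreFree R) (e : R ≃+* S) : ProjectivesAreFree S := by
  intro M _ _ _ _
  let _ : Module R M := Module.compHom M e.toRingHom
  let _ := RingHomInvPair.of_ringEquiv e
  let _ := RingHomInvPair.of_ringEquiv e.symm
  let ε : M ≃ₛₗ[(e : R →+* S)] M :=
    { AddEquiv.refl M with map_smul' := fun _ _ => rfl }
  have : Module.Projective R M := Module.Projective.of_equiv ε.symm
  have : Module.Finite R M := Module.Finite.of_surjective ε.symm.toLinearMap ε.symm.surjective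
  have := h M
  exact Module.Free.of_equiv ε

namespace MvPolynomial

theorem isHermiteRing (k : Type*) [Field k] (n : ℕ) : IsHermiteRing (MvPolynomial (Fin n) k) := by
  intro l w hw
  obtain _ | l := l
  · obtain ⟨c, hc⟩ := Ideal.mem_span_range_iff_exists_fun.1 (hw ▸ Submodule.mem_top :
      (1 : MvPolynomial (Fin n) k) ∈ Ideal.span (Set.range w))
    rw [Fin.sum_univ_one] at hc
    refine ⟨Matrix.diagonal c, ?_, ?_⟩
    · rw [Matrix.det_diagonal, Fin.prod_univ_one]
      exact IsUnit.of_mul_eq_one _ hc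
    · ext1 i
      rw [Fin.fin_one_eq_zero i, Matrix.mulVec_diagonal, hc, Pi.single_eq_same]
  · obtain ⟨W, hW, hWw⟩ := liftableOrbit_single (RingHom.id k) Function.surjective_id
      (zero_ne_one (α := Fin (l + 2))) n w hw
    refine ⟨W, by simp [hW], ?_⟩
    rw [← hWw]
    congr 1
    ext1 i j
    simp [map_id]

theorem exists_ringEquiv_hasFiniteFreeResolutions (k : Type u) [Field k] (n : ℕ) :
    ∃ (T : Type u) (_ : CommRing T), IsNoetherianRing T ∧ HasFiniteFreeResolutions T ∧
      Nonempty (T ≃+* MvPolynomial (Fin n) k) := by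
  induction n with
  | zero =>
    refine ⟨k, inferInstance, inferInstance, fun M _ _ _ => ⟨0, ?_⟩,
      ⟨(isEmptyRingEquiv k (Fin 0)).symm⟩⟩
    exact ⟨inferInstance, inferInstance⟩
  | succ n ih =>
    obtain ⟨T, _, _, hT, ⟨e⟩⟩ := ih
    refine ⟨T[X], inferInstance, inferInstance,
      fun M _ _ _ => Polynomial.exists_hasFiniteFreeResolution hT M, ⟨?_⟩⟩
    exact (Polynomial.mapEquiv e).trans (finSuccEquiv k n).symm.toRingEquiv

/-- The Quillen–Suslin theorem: finitely generated projective modules over a polynomial ring over a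
field are free. -/
theorem projectivesAreFree (k : Type u) [Field k] (n : ℕ) :
    ProjectivesAreFree (MvPolynomial (Fin n) k) := by
  obtain ⟨T, _, _, hT, ⟨e⟩⟩ := exists_ringEquiv_hasFiniteFreeResolutions k n
  have hH : IsHermiteRing T := (isHermiteRing k n).of_ringEquiv e.symm
  refine ProjectivesAreFree.of_ringEquiv (fun M _ _ _ _ => ?_) e
  obtain ⟨d, hd⟩ := hT M
  have := hd.isStablyFree
  exact hH.free_of_isStablyFree M

end MvPolynomial

end QuillenSuslin

section SmithForm

open scoped Matrix

namespace Matrix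

variable {R : Type*} [CommRing R] {m n k : Type*}

/-- The ideal generated by the `i × i` minors. -/
def minorIdeal (i : ℕ) (F : Matrix m n R) : Ideal R :=
  Ideal.span {a | ∃ (f : Fin i → m) (g : Fin i → n), a = (F.submatrix f g).det}

theorem det_submatrix_mem_minorIdeal {i : ℕ} (F : Matrix m n R) (f : Fin i → m) (g : Fin i → n) :
    (F.submatrix f g).det ∈ minorIdeal i F :=
  Ideal.subset_span ⟨f, g, rfl⟩

theorem minorIdeal_le {i : ℕ} {F : Matrix m n R} {J : Ideal R} :
    minorIdeal i F ≤ J ↔ ∀ (f : Fin i → m) (g : Fin i → n), (F.submatrix f g).det ∈ J := by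
  rw [minorIdeal, Ideal.span_le]
  exact ⟨fun h f g => h ⟨f, g, rfl⟩, by rintro h _ ⟨f, g, rfl⟩; exact h f g⟩

theorem minorIdeal_transpose (i : ℕ) (F : Matrix m n R) : minorIdeal i Fᵀ = minorIdeal i F := by
  apply le_antisymm <;> rw [minorIdeal_le] <;> intro f g
  · rw [← transpose_submatrix, det_transpose]
    exact det_submatrix_mem_minorIdeal F g f
  · rw [← det_transpose, transpose_submatrix]
    exact det_submatrix_mem_minorIdeal Fᵀ g f

theorem minorIdeal_mul_le_right [Fintype k] (i : ℕ) (U : Matrix m k R) (G : Matrix k n R) :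
    minorIdeal i (U * G) ≤ minorIdeal i G := by
  classical
  rw [minorIdeal_le]
  intro f g
  have h : (U * G).submatrix f g = fun a => ∑ x, U (f a) x • fun b => G x (g b) := by
    ext a b
    simp [Matrix.mul_apply, Finset.sum_apply]
  rw [h]
  change (detRowAlternating : AlternatingMap R (Fin i → R) R (Fin i)).toMultilinearMap _ ∈ _
  rw [MultilinearMap.map_sum]
  refine Ideal.sum_mem _ fun κ _ => ?_
  rw [MultilinearMap.map_smul_univ]
  exact Ideal.mul_mem_left _ _ (det_submatrix_mem_minorIdeal G κ g)

theorem minorIdeal_mul_le_left [Fintype k] (i : ℕ) (F : Matrix m k R) (V : Matrix k n R) :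
    minorIdeal i (F * V) ≤ minorIdeal i F := by
  rw [← minorIdeal_transpose, transpose_mul, ← minorIdeal_transpose i F]
  exact minorIdeal_mul_le_right _ _ _

theorem minorIdeal_succ_le (i : ℕ) (F : Matrix m n R) :
    minorIdeal (i + 1) F ≤ minorIdeal i F := by
  rw [minorIdeal_le]
  intro f g
  rw [det_succ_row_zero]
  exact Ideal.sum_mem _ fun j _ => Ideal.mul_mem_left _ _
    (det_submatrix_mem_minorIdeal F (f ∘ Fin.succ) (g ∘ j.succAbove))

theorem minorIdeal_map {S : Type*} [CommRing S] (φ : R →+* S) (i : ℕ) (F : Matrix m n R) :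
    minorIdeal i (F.map φ) = (minorIdeal i F).map φ := by
  have h (f : Fin i → m) (g : Fin i → n) :
      ((F.map φ).submatrix f g).det = φ (F.submatrix f g).det := by
    rw [RingHom.map_det]; rfl
  apply le_antisymm
  · rw [minorIdeal_le]
    intro f g
    rw [h]
    exact Ideal.mem_map_of_mem _ (det_submatrix_mem_minorIdeal F f g)
  · rw [Ideal.map_le_iff_le_comap, minorIdeal_le]
    intro f g
    rw [Ideal.mem_comap, ← h]
    exact det_submatrix_mem_minorIdeal _ f g

theorem minorIdeal_smul (c : R) (i : ℕ) (F : Matrix m n R) :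
    minorIdeal i (c • F) = Ideal.span {c ^ i} * minorIdeal i F := by
  have h (f : Fin i → m) (g : Fin i → n) :
      ((c • F).submatrix f g).det = c ^ i * (F.submatrix f g).det := by
    have e : (c • F).submatrix f g = c • F.submatrix f g := rfl
    rw [e, det_smul, Fintype.card_fin]
  apply le_antisymm
  · rw [minorIdeal_le]
    intro f g
    rw [h]
    exact Ideal.mul_mem_mul (Ideal.mem_span_singleton_self _) (det_submatrix_mem_minorIdeal F f g)
  · rw [minorIdeal, Ideal.span_mul_span', Ideal.span_le]
    rintro _ ⟨_, rfl, _, ⟨f, g, rfl⟩, rfl⟩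
    exact Ideal.subset_span ⟨f, g, (h f g).symm⟩

theorem minorIdeal_zero (F : Matrix m n R) : minorIdeal 0 F = ⊤ := by
  rw [Ideal.eq_top_iff_one]
  exact Ideal.subset_span ⟨Fin.elim0, Fin.elim0, by simp⟩

theorem mem_minorIdeal_one (F : Matrix m n R) (a : m) (b : n) : F a b ∈ minorIdeal 1 F :=
  Ideal.subset_span ⟨fun _ => a, fun _ => b, by simp⟩

theorem minorIdeal_one_le {F : Matrix m n R} {J : Ideal R} :
    minorIdeal 1 F ≤ J ↔ ∀ a b, F a b ∈ J := by
  refine ⟨fun h a b => h (mem_minorIdeal_one F a b), fun h => minorIdeal_le.2 fun f g => ?_⟩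
  simpa using h (f 0) (g 0)

theorem minorIdeal_eq_span_minorsSet {l m : ℕ} (i : ℕ) (F : Matrix (Fin l) (Fin m) R) :
    minorIdeal i F = Ideal.span (minorsSet i F) := by
  have sorted : ∀ {l : ℕ} (f : Fin i → Fin l), Function.Injective f →
      ∃ (f' : Fin i → Fin l) (σ : Equiv.Perm (Fin i)), StrictMono f' ∧ f = f' ∘ σ := by
    intro l f hf
    refine ⟨f ∘ Tuple.sort f, (Tuple.sort f)⁻¹,
      (Tuple.monotone_sort f).strictMono_of_injective (hf.comp (Equiv.injective _)), ?_⟩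
    ext1 x
    simp
  apply le_antisymm
  · rw [minorIdeal_le]
    intro f g
    by_cases hf : Function.Injective f
    · by_cases hg : Function.Injective g
      · obtain ⟨f', σ, hf', rfl⟩ := sorted f hf
        obtain ⟨g', τ, hg', rfl⟩ := sorted g hg
        have h : F.submatrix (f' ∘ σ) (g' ∘ τ) =
            ((F.submatrix f' g').submatrix σ id).submatrix id τ := rfl
        rw [h, det_permute', det_permute]
        exact Ideal.mul_mem_left _ _ (Ideal.mul_mem_left _ _
          (Ideal.subset_span ⟨f', g', hf', hg', rfl⟩))
      · obtain ⟨a, b, hab, hne⟩ := Function.not_injective_iff.1 hg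
        rw [det_zero_of_column_eq hne (fun c => by simp [hab])]
        exact zero_mem _
    · obtain ⟨a, b, hab, hne⟩ := Function.not_injective_iff.1 hf
      rw [det_zero_of_row_eq hne (by ext c; simp [hab])]
      exact zero_mem _
  · rw [Ideal.span_le]
    rintro _ ⟨f, g, -, -, rfl⟩
    exact det_submatrix_mem_minorIdeal F f g

theorem minorIdeal_rank_succ [IsDomain R] [Fintype m] [Fintype n] (F : Matrix m n R) :
    minorIdeal (F.rank + 1) F = ⊥ := by
  classical
  rw [eq_bot_iff, minorIdeal_le]
  intro f g
  rw [Ideal.mem_bot]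
  by_contra hdet
  have hli : LinearIndependent R (fun j => F.col (g j)) := by
    have h1 : LinearIndependent R (F.submatrix f g).col :=
      linearIndependent_cols_of_det_ne_zero hdet
    exact LinearIndependent.of_comp (LinearMap.funLeft R R f) h1
  have hmem (j) : F.col (g j) ∈ LinearMap.range F.mulVecLin :=
    ⟨Pi.single (g j) 1, by simp⟩
  have h2 : LinearIndependent R (fun j => (⟨F.col (g j), hmem j⟩ : LinearMap.range F.mulVecLin)) :=
    LinearIndependent.of_comp (Submodule.subtype _) hli
  have := h2.fintype_card_le_finrank
  rw [Fintype.card_fin] at this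
  exact absurd this (by simp [Matrix.rank])

/-- Splitting off a unit in the upper left corner shifts the ideals of minors. -/
theorem minorIdeal_succ_of_unit_corner {l m : ℕ} (G : Matrix (Fin (l + 1)) (Fin (m + 1)) R)
    (h00 : G 0 0 = 1) (h0 : ∀ j : Fin m, G 0 j.succ = 0) (h0' : ∀ i : Fin l, G i.succ 0 = 0)
    (i : ℕ) : minorIdeal (i + 1) G = minorIdeal i (G.submatrix Fin.succ Fin.succ) := by
  have hcorner (f : Fin (i + 1) → Fin (l + 1)) (g : Fin (i + 1) → Fin (m + 1)) (hf : f 0 = 0)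
      (hg : g 0 = 0) (hg' : ∀ j : Fin i, g j.succ ≠ 0) :
      (G.submatrix f g).det = (G.submatrix (f ∘ Fin.succ) (g ∘ Fin.succ)).det := by
    have hz (j : Fin i) : G 0 (g j.succ) = 0 := by
      obtain ⟨y, hy⟩ := Fin.exists_succ_eq.2 (hg' j)
      rw [← hy, h0]
    rw [det_succ_row_zero, Fin.sum_univ_succ, Finset.sum_eq_zero (fun j _ => by simp [hf, hz])]
    simp [hf, hg, h00]
  have hsucc {l : ℕ} {j : ℕ} (f : Fin j → Fin (l + 1)) (hf : ∀ x, f x ≠ 0) :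
      ∃ f' : Fin j → Fin l, f = Fin.succ ∘ f' := by
    choose f' hf' using fun x => Fin.exists_succ_eq.2 (hf x)
    exact ⟨f', funext fun x => (hf' x).symm⟩
  apply le_antisymm
  · rw [minorIdeal_eq_span_minorsSet, Ideal.span_le]
    rintro _ ⟨f, g, hf, hg, rfl⟩
    have hf1 (x : Fin i) : f x.succ ≠ 0 := ((Fin.zero_le _).trans_lt (hf x.succ_pos)).ne'
    have hg1 (x : Fin i) : g x.succ ≠ 0 := ((Fin.zero_le _).trans_lt (hg x.succ_pos)).ne'
    have hpos {l : ℕ} (f : Fin (i + 1) → Fin (l + 1)) (hf : ∀ x : Fin i, f x.succ ≠ 0)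
        (h : f 0 ≠ 0) : ∃ f' : Fin (i + 1) → Fin l, f = Fin.succ ∘ f' :=
      hsucc f fun x => by cases x using Fin.cases <;> simp_all
    by_cases hf0 : f 0 = 0 <;> by_cases hg0 : g 0 = 0
    · rw [hcorner f g hf0 hg0 hg1]
      obtain ⟨f', hf'⟩ := hsucc (f ∘ Fin.succ) hf1
      obtain ⟨g', hg'⟩ := hsucc (g ∘ Fin.succ) hg1
      rw [hf', hg', ← submatrix_submatrix]
      exact det_submatrix_mem_minorIdeal _ f' g'
    · obtain ⟨g', rfl⟩ := hpos g hg1 hg0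
      rw [det_eq_zero_of_row_eq_zero 0 fun j => by simp [hf0, h0]]
      exact zero_mem _
    · obtain ⟨f', rfl⟩ := hpos f hf1 hf0
      rw [det_eq_zero_of_column_eq_zero 0 fun j => by simp [hg0, h0']]
      exact zero_mem _
    · obtain ⟨f', rfl⟩ := hpos f hf1 hf0
      obtain ⟨g', rfl⟩ := hpos g hg1 hg0
      rw [← submatrix_submatrix]
      exact minorIdeal_succ_le _ _ (det_submatrix_mem_minorIdeal _ f' g')
  · rw [minorIdeal_le]
    intro f g
    have := hcorner (Fin.cons 0 (Fin.succ ∘ f)) (Fin.cons 0 (Fin.succ ∘ g)) rfl rfl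
      (fun j => by simp)
    rw [submatrix_submatrix]
    exact this ▸ det_submatrix_mem_minorIdeal _ _ _

end Matrix

namespace Matrix

variable {A : Type*} [CommRing A] {m n : Type*}

theorem det_smul_eq_of_minorIdeal_succ_eq_bot [IsDomain A] {k : ℕ} (F : Matrix m n A)
    (hF : minorIdeal (k + 1) F = ⊥) (f : Fin k → m) (g : Fin k → n)
    (hΔ : (F.submatrix f g).det ≠ 0) :
    (F.submatrix f g).det • F =
      F.submatrix id g * (F.submatrix f g).adjugate * F.submatrix f id := by
  set P := F.submatrix f g with hP
  ext a b
  let q : Matrix (Fin k) Unit A := F.submatrix f fun _ => b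
  let ρ : Matrix Unit (Fin k) A := F.submatrix (fun _ => a) g
  let x : Matrix Unit Unit A := F.submatrix (fun _ => a) fun _ => b
  have hM : (fromBlocks P q ρ x).det = 0 := by
    let e : Fin k ⊕ Unit ≃ Fin (k + 1) :=
      (Equiv.sumCongr (Equiv.refl _) (finOneEquiv.symm)).trans finSumFinEquiv
    have h1 : fromBlocks P q ρ x = F.submatrix (Sum.elim f fun _ => a) (Sum.elim g fun _ => b) := by
      ext (i | i) (j | j) <;> rfl
    have h2 := det_submatrix_mem_minorIdeal F ((Sum.elim f fun _ => a) ∘ e.symm)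
      ((Sum.elim g fun _ => b) ∘ e.symm)
    rw [hF, Ideal.mem_bot, ← submatrix_submatrix, det_submatrix_equiv_self] at h2
    rw [h1, h2]
  have hmul : fromBlocks P.adjugate 0 (-(ρ * P.adjugate)) (P.det • 1) * fromBlocks P q ρ x =
      fromBlocks (P.det • 1) (P.adjugate * q) 0 (P.det • x - ρ * P.adjugate * q) := by
    rw [fromBlocks_multiply]
    congr 1
    · simp [adjugate_mul]
    · simp
    · rw [Matrix.neg_mul, Matrix.mul_assoc, adjugate_mul]
      simp
    · rw [Matrix.neg_mul, smul_mul, Matrix.one_mul, neg_add_eq_sub]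
  have hdet := congrArg det hmul
  rw [det_mul, hM, mul_zero, det_fromBlocks_zero₂₁, det_smul, det_one, mul_one] at hdet
  have h0 := (mul_eq_zero.1 hdet.symm).resolve_left (pow_ne_zero _ hΔ)
  rw [det_unique, sub_apply, sub_eq_zero] at h0
  exact h0

theorem mul_adjugate_submatrix_apply [DecidableEq m] {k : ℕ} (F : Matrix m n A) (f : Fin k → m)
    (g : Fin k → n) (a : m) (j : Fin k) :
    (F.submatrix id g * (F.submatrix f g).adjugate) a j =
      (F.submatrix (Function.update f j a) g).det := by
  have h1 : (F.submatrix id g * (F.submatrix f g).adjugate) a j =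
      ((F.submatrix f g)ᵀ.adjugate *ᵥ fun x => F a (g x)) j := by
    rw [← adjugate_transpose]
    simp [Matrix.mul_apply, mulVec, dotProduct, mul_comm]
  rw [h1, ← cramer_eq_adjugate_mulVec, cramer_transpose_apply]
  congr 1
  ext x y
  by_cases h : x = j
  · subst h; simp
  · simp [h]

/-- A matrix of determinantal rank `k` whose ideal of `k × k` minors is principal with nonzero
generator `d` admits a projection `E` onto a direct summand in which the image of `F` has
`d`-torsion cokernel. -/
theorem exists_mul_eq_self_of_minorIdeal_eq_span [IsDomain A] [Fintype m] [Fintype n]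
    [DecidableEq m] {k : ℕ} {d : A} (hd : d ≠ 0) (F : Matrix m n A)
    (hk : minorIdeal k F = Ideal.span {d}) (hk' : minorIdeal (k + 1) F = ⊥) :
    ∃ (E : Matrix m m A) (X : Matrix n m A), d • E = F * X ∧ E * F = F := by
  classical
  let J : Ideal A :=
    { carrier := {a | ∃ (E : Matrix m m A) (X : Matrix n m A),
        d • E = F * X ∧ d • (E * F) = a • F}
      zero_mem' := ⟨0, 0, by simp, by simp⟩
      add_mem' := by
        rintro a b ⟨E, X, h1, h2⟩ ⟨E', X', h1', h2'⟩
        exact ⟨E + E', X + X', by rw [smul_add, h1, h1', Matrix.mul_add],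
          by rw [Matrix.add_mul, smul_add, h2, h2', add_smul]⟩
      smul_mem' := by
        rintro c a ⟨E, X, h1, h2⟩
        exact ⟨c • E, c • X, by rw [smul_comm, h1, Matrix.mul_smul],
          by rw [Matrix.smul_mul, smul_comm, h2, smul_assoc]⟩ }
  have hJ : minorIdeal k F ≤ J := by
    rw [minorIdeal_le]
    intro f g
    by_cases hΔ : (F.submatrix f g).det = 0
    · rw [hΔ]; exact zero_mem _
    have hdvd (a : m) (j : Fin k) :
        d ∣ (F.submatrix id g * (F.submatrix f g).adjugate) a j := by
      rw [mul_adjugate_submatrix_apply, ← Ideal.mem_span_singleton, ← hk]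
      exact det_submatrix_mem_minorIdeal _ _ _
    choose H hH using hdvd
    have hH' : F.submatrix id g * (F.submatrix f g).adjugate = d • Matrix.of H := by
      ext a j; simp [hH]
    refine ⟨Matrix.of H * (1 : Matrix m m A).submatrix f id,
      (1 : Matrix n n A).submatrix id g * (F.submatrix f g).adjugate *
        (1 : Matrix m m A).submatrix f id, ?_, ?_⟩
    · rw [← Matrix.smul_mul, ← hH', ← Matrix.mul_assoc, ← Matrix.mul_assoc]
      congr 2
      ext a b
      simp [Matrix.mul_apply, Matrix.one_apply]
    · rw [Matrix.mul_assoc, ← Matrix.smul_mul, ← hH',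
        det_smul_eq_of_minorIdeal_succ_eq_bot F hk' f g hΔ]
      congr 1
      ext a b
      simp [Matrix.mul_apply, Matrix.one_apply]
  obtain ⟨E, X, h1, h2⟩ : d ∈ J := hJ (hk ▸ Ideal.mem_span_singleton_self d)
  refine ⟨E, X, h1, ?_⟩
  ext a b
  exact mul_left_cancel₀ hd (congrFun (congrFun h2 a) b)

end Matrix

theorem span_range_eq_top_of_linearMap {R ι : Type*} [CommRing R] [Fintype ι] {w : ι → R}
    (φ : (ι → R) →ₗ[R] R) (h : φ w = 1) : Ideal.span (Set.range w) = ⊤ := by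
  classical
  rw [Ideal.eq_top_iff_one, Ideal.mem_span_range_iff_exists_fun]
  refine ⟨fun i => φ (Pi.single i 1), ?_⟩
  have h2 : w = ∑ i, w i • Pi.single i (1 : R) := by
    ext j
    simp [Finset.sum_apply, Pi.single_apply]
  conv_rhs => rw [← h, h2, map_sum]
  simp [mul_comm]

namespace Matrix

theorem projective_range_of_mul_self {R : Type*} [CommRing R] {m : Type*} [Fintype m]
    {E : Matrix m m R} (hE : E * E = E) : Module.Projective R (LinearMap.range E.mulVecLin) := by
  refine Module.Projective.of_split (LinearMap.range E.mulVecLin).subtype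
    E.mulVecLin.rangeRestrict ?_
  ext1 ⟨_, y, rfl⟩
  apply Subtype.ext
  simp [hE]

theorem mulVec_eq_self_of_mem_range {R : Type*} [CommRing R] {m : Type*} [Fintype m]
    {E : Matrix m m R} (hE : E * E = E) {x : m → R} (hx : x ∈ LinearMap.range E.mulVecLin) :
    E *ᵥ x = x := by
  obtain ⟨y, rfl⟩ := hx
  simp [hE]

theorem minorIdeal_eq_bot_of_pos {R m n : Type*} [CommRing R] {k : ℕ} (hk : 0 < k) :
    minorIdeal k (0 : Matrix m n R) = ⊥ := by
  obtain ⟨k, rfl⟩ := Nat.exists_eq_succ_of_ne_zero hk.ne'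
  rw [eq_bot_iff, minorIdeal_le]
  intro f g
  rw [det_eq_zero_of_row_eq_zero 0 fun j => rfl]
  exact zero_mem _

theorem minorIdeal_antitone {R m n : Type*} [CommRing R] (F : Matrix m n R) :
    Antitone fun i => minorIdeal i F :=
  antitone_nat_of_succ_le fun i => minorIdeal_succ_le i F

theorem exists_mulVec_unimodular_of_minorIdeal_eq_top {B : Type u} [CommRing B] [IsDomain B]
    (hB : ProjectivesAreFree B) {l m : ℕ} (F : Matrix (Fin l) (Fin m) B) {k : ℕ} (hk : 0 < k)
    (h : minorIdeal k F = ⊤) (h' : minorIdeal (k + 1) F = ⊥) :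
    ∃ v, Ideal.span (Set.range (F *ᵥ v)) = ⊤ := by
  obtain ⟨E, X, hX, hEF⟩ := exists_mul_eq_self_of_minorIdeal_eq_span one_ne_zero F
    (by rw [h, Ideal.span_singleton_one]) h'
  rw [one_smul] at hX
  have hE : E * E = E := by
    nth_rewrite 2 [hX]
    rw [← Matrix.mul_assoc, hEF, hX]
  have := projective_range_of_mul_self hE
  have := hB (LinearMap.range E.mulVecLin)
  let β := Module.Free.chooseBasis B (LinearMap.range E.mulVecLin)
  obtain hι | ⟨⟨i₀⟩⟩ := isEmpty_or_nonempty (Module.Free.ChooseBasisIndex B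
    (LinearMap.range E.mulVecLin))
  · have hsub : Subsingleton (LinearMap.range E.mulVecLin) :=
      β.equivFun.toEquiv.subsingleton
    have hE0 : E = 0 := by
      ext i j
      have := congrArg Subtype.val (hsub.elim ⟨E.mulVecLin (Pi.single j 1), ⟨_, rfl⟩⟩ 0)
      simpa using congrFun this i
    rw [hE0, Matrix.zero_mul] at hEF
    rw [← hEF, minorIdeal_eq_bot_of_pos hk] at h
    exact absurd h bot_ne_top
  · have hu : F *ᵥ (X *ᵥ (β i₀ : Fin l → B)) = β i₀ := by
      rw [mulVec_mulVec, ← hX, mulVec_eq_self_of_mem_range hE (β i₀).2]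
    refine ⟨X *ᵥ (β i₀ : Fin l → B), ?_⟩
    rw [hu]
    refine span_range_eq_top_of_linearMap (β.coord i₀ ∘ₗ E.mulVecLin.rangeRestrict) ?_
    have : E.mulVecLin.rangeRestrict (β i₀ : Fin l → B) = β i₀ :=
      Subtype.ext (mulVec_eq_self_of_mem_range hE (β i₀).2)
    simp [this]

/-- A vector whose reduction modulo `p` is unimodular can be modified modulo `p ^ t` so as to become
unimodular. -/
theorem exists_unimodular_add_smul {A B : Type*} [CommRing A] [CommRing B] {p : A} (π : A →+* B)
    (hker : RingHom.ker π = Ideal.span {p})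
    {ρ : ℕ} (ω : Fin (ρ + 2) → A) (t : ℕ)
    (hω : LiftableOrbit π (π ∘ ω) (Pi.single 0 1)) :
    ∃ q : Fin (ρ + 2) → A, Ideal.span (Set.range (ω + p ^ t • q)) = ⊤ := by
  obtain ⟨M, hM, hMω⟩ := hω
  set ζ := M *ᵥ ω with hζ
  have h0 : IsCoprime (ζ 0) (p ^ t) := by
    have h1 : ζ 0 - 1 ∈ RingHom.ker π := by
      have := RingHom.map_mulVec π M ω 0
      rw [RingHom.mem_ker, map_sub, map_one, hζ, this, hMω]
      simp
    rw [hker, Ideal.mem_span_singleton] at h1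
    obtain ⟨c, hc⟩ := h1
    exact IsCoprime.pow_right ⟨1, -c, by linear_combination hc⟩
  obtain ⟨x, y, hxy⟩ := h0
  let z : Fin (ρ + 2) → A := Pi.single 1 (y * (1 - ζ 1))
  refine ⟨M.adjugate *ᵥ z, ?_⟩
  have hMM : M *ᵥ (ω + p ^ t • (M.adjugate *ᵥ z)) = ζ + p ^ t • z := by
    rw [mulVec_add, mulVec_smul, mulVec_mulVec, mul_adjugate, hM, one_smul, one_mulVec]
  refine span_range_eq_top_of_linearMap (((1 : A) • LinearMap.proj 1 +
    (x * (1 - ζ 1)) • LinearMap.proj 0) ∘ₗ M.mulVecLin) ?_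
  rw [LinearMap.comp_apply, mulVecLin_apply, hMM]
  simp [z]
  linear_combination (1 - ζ 1) * hxy

theorem exists_mulVec_unimodular {A : Type u} {B : Type v} [CommRing A] [IsDomain A] [CommRing B]
    [IsDomain B] {p : A} (hp : p ≠ 0) (π : A →+* B) (hπ : Function.Surjective π)
    (hker : RingHom.ker π = Ideal.span {p}) (hA : ProjectivesAreFree A)
    (hB : ProjectivesAreFree B)
    (hlift : ∀ (ρ : ℕ) (v : Fin (ρ + 2) → B), Ideal.span (Set.range v) = ⊤ →
      LiftableOrbit π v (Pi.single 0 1))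
    {l m : ℕ} (F : Matrix (Fin l) (Fin m) A) {r t : ℕ}
    (hr : minorIdeal r F = Ideal.span {p ^ t}) (hr' : minorIdeal (r + 1) F = ⊥)
    {k : ℕ} (hk : 0 < k) (h : minorIdeal k F = ⊤) (h' : minorIdeal (k + 1) F ≤ Ideal.span {p}) :
    ∃ v, Ideal.span (Set.range (F *ᵥ v)) = ⊤ := by
  obtain ⟨v, hv⟩ := exists_mulVec_unimodular_of_minorIdeal_eq_top hB (F.map π) hk
    (by rw [minorIdeal_map, h, Ideal.map_top])
    (by
      rw [minorIdeal_map, eq_bot_iff, Ideal.map_le_iff_le_comap]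
      exact h'.trans hker.ge)
  choose v hv' using fun i => hπ (v i)
  obtain rfl : π ∘ v = _ := funext hv'
  have hFv : F.map π *ᵥ (π ∘ v) = π ∘ (F *ᵥ v) :=
    funext fun i => (RingHom.map_mulVec π F v i).symm
  rw [hFv] at hv
  obtain ⟨E, X, hX, hEF⟩ := exists_mul_eq_self_of_minorIdeal_eq_span (pow_ne_zero t hp) F hr hr'
  have hE : E * E = E := by
    have : p ^ t • (E * E) = p ^ t • E := by
      rw [← Matrix.mul_smul, hX, ← Matrix.mul_assoc, hEF]
    ext i j
    exact mul_left_cancel₀ (pow_ne_zero t hp) (congrFun (congrFun this i) j)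
  have hEFv (x) : E *ᵥ (F *ᵥ x) = F *ᵥ x := by rw [mulVec_mulVec, hEF]
  let Q := LinearMap.range E.mulVecLin
  have hFQ (x) : F *ᵥ x ∈ Q := ⟨F *ᵥ x, hEFv x⟩
  have : Module.Projective A Q := projective_range_of_mul_self hE
  have := hA Q
  obtain ⟨ρ, ⟨β⟩⟩ : ∃ ρ : ℕ, Nonempty (Module.Basis (Fin ρ) A Q) :=
    ⟨_, ⟨(Module.Free.chooseBasis A Q).reindex (Fintype.equivFin _)⟩⟩
  have hunim (w : Q) (φ : Q →ₗ[A] A) (hw : φ w = 1) :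
      Ideal.span (Set.range (w : Fin l → A)) = ⊤ := by
    refine span_range_eq_top_of_linearMap (φ ∘ₗ E.mulVecLin.rangeRestrict) ?_
    have : E.mulVecLin.rangeRestrict (w : Fin l → A) = w :=
      Subtype.ext (mulVec_eq_self_of_mem_range hE w.2)
    simp [this, hw]
  let w : Q := ⟨F *ᵥ v, hFQ v⟩
  let ω := β.equivFun w
  have hω : Ideal.span (Set.range (π ∘ ω)) = ⊤ := by
    rw [eq_top_iff, ← hv, Ideal.span_le]
    rintro _ ⟨i, rfl⟩
    have h1 : (F *ᵥ v) i = ∑ j, ω j * (β j : Fin l → A) i := by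
      have := congrFun (congrArg Subtype.val (β.sum_equivFun w)) i
      refine this.symm.trans ?_
      simp only [AddSubmonoidClass.coe_finsetSum, Finset.sum_apply, Submodule.coe_smul,
        Pi.smul_apply, smul_eq_mul, ω]
    rw [Function.comp_apply, h1, map_sum]
    refine Ideal.sum_mem _ fun j _ => ?_
    rw [map_mul]
    exact Ideal.mul_mem_right _ _ (Ideal.subset_span ⟨j, rfl⟩)
  obtain _ | _ | ρ := ρ
  · rw [Set.range_eq_empty, Ideal.span_empty] at hω
    exact absurd hω bot_ne_top
  · let f : Fin m → A := fun j => β.coord 0 ⟨F *ᵥ Pi.single j 1, hFQ _⟩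
    have hf : Ideal.span (Set.range f) = ⊤ := by
      have h1 : minorIdeal 1 F = ⊤ := eq_top_iff.2 (h.ge.trans (minorIdeal_antitone F hk))
      rw [eq_top_iff, ← h1, minorIdeal_one_le]
      intro a b
      have := congrFun (congrArg Subtype.val
        (β.sum_equivFun ⟨F *ᵥ Pi.single b 1, hFQ _⟩)) a
      have h2 : F a b = f b * (β 0 : Fin l → A) a := by
        simpa [f] using this.symm
      rw [h2]
      exact Ideal.mul_mem_right _ _ (Ideal.subset_span ⟨b, rfl⟩)
    obtain ⟨c, hc⟩ := Ideal.mem_span_range_iff_exists_fun.1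
      (hf ▸ Submodule.mem_top : (1 : A) ∈ Ideal.span (Set.range f))
    refine ⟨c, hunim ⟨F *ᵥ c, hFQ c⟩ (β.coord 0) ?_⟩
    have h3 : (⟨F *ᵥ c, hFQ c⟩ : Q) = ∑ j, c j • ⟨F *ᵥ Pi.single j 1, hFQ _⟩ := by
      apply Subtype.ext
      ext i
      simp [mulVec, dotProduct, Finset.sum_apply, mul_comm]
    refine Eq.trans ?_ hc
    rw [h3, map_sum]
    exact Finset.sum_congr rfl fun j _ => by rw [map_smul, smul_eq_mul]
  · obtain ⟨q, hq⟩ := exists_unimodular_add_smul π hker ω t (hlift ρ _ hω)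
    obtain ⟨c, hc⟩ := Ideal.mem_span_range_iff_exists_fun.1
      (hq ▸ Submodule.mem_top : (1 : A) ∈ Ideal.span (Set.range (ω + p ^ t • q)))
    let y : Q := β.equivFun.symm q
    have hy : F *ᵥ (v + X *ᵥ (y : Fin l → A)) = ((w + p ^ t • y : Q) : Fin l → A) := by
      rw [mulVec_add, mulVec_mulVec, ← hX, smul_mulVec, mulVec_eq_self_of_mem_range hE y.2]
      rfl
    refine ⟨v + X *ᵥ (y : Fin l → A), ?_⟩
    rw [hy]
    refine hunim _ (∑ i, c i • β.coord i) ?_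
    refine Eq.trans ?_ hc
    have hyq : β.equivFun y = q := β.equivFun.apply_symm_apply q
    rw [LinearMap.sum_apply]
    refine Finset.sum_congr rfl fun i _ => ?_
    rw [LinearMap.smul_apply, smul_eq_mul, map_add, map_smul, ← hyq]
    rfl

end Matrix

namespace MatrixEquiv

variable {R : Type*} [CommRing R] {l m : ℕ}

theorem trans {F G H : Matrix (Fin l) (Fin m) R} (h : MatrixEquiv F G) (h' : MatrixEquiv G H) :
    MatrixEquiv F H := by
  obtain ⟨U, V, hU, hV, rfl⟩ := h
  obtain ⟨U', V', hU', hV', rfl⟩ := h'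
  refine ⟨U * U', V' * V, ?_, ?_, by simp only [Matrix.mul_assoc]⟩
  · rw [Matrix.det_mul]; exact hU.mul hU'
  · rw [Matrix.det_mul]; exact hV'.mul hV

theorem symm {F G : Matrix (Fin l) (Fin m) R} (h : MatrixEquiv F G) : MatrixEquiv G F := by
  obtain ⟨U, V, hU, hV, rfl⟩ := h
  refine ⟨U⁻¹, V⁻¹, Matrix.isUnit_nonsing_inv_det _ hU, Matrix.isUnit_nonsing_inv_det _ hV, ?_⟩
  rw [← Matrix.mul_assoc, Matrix.mul_nonsing_inv_cancel_right _ _ hV,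
    Matrix.nonsing_inv_mul_cancel_left _ _ hU]

theorem smul {F G : Matrix (Fin l) (Fin m) R} (h : MatrixEquiv F G) (c : R) :
    MatrixEquiv (c • F) (c • G) := by
  obtain ⟨U, V, hU, hV, rfl⟩ := h
  exact ⟨U, V, hU, hV, by rw [Matrix.mul_smul, Matrix.smul_mul]⟩

theorem minorIdeal_le {F G : Matrix (Fin l) (Fin m) R} (h : MatrixEquiv F G) (i : ℕ) :
    F.minorIdeal i ≤ G.minorIdeal i := by
  obtain ⟨U, V, -, -, rfl⟩ := h
  exact (Matrix.minorIdeal_mul_le_left i _ V).trans (Matrix.minorIdeal_mul_le_right i U G)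

theorem minorIdeal_eq {F G : Matrix (Fin l) (Fin m) R} (h : MatrixEquiv F G) (i : ℕ) :
    F.minorIdeal i = G.minorIdeal i :=
  le_antisymm (h.minorIdeal_le i) (h.symm.minorIdeal_le i)

end MatrixEquiv

namespace Matrix

section UnitCorner

variable {R : Type*} [CommRing R]

/-- The block diagonal matrix `1 ⊕ F`. -/
def unitCorner {l m : ℕ} (F : Matrix (Fin l) (Fin m) R) :
    Matrix (Fin (l + 1)) (Fin (m + 1)) R :=
  of (Fin.cons (Fin.cons 1 0) fun i => Fin.cons 0 (F i))

variable {k l m : ℕ} (F : Matrix (Fin l) (Fin m) R)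

@[simp] theorem unitCorner_zero_zero : unitCorner F 0 0 = 1 := rfl

@[simp] theorem unitCorner_zero_succ (j : Fin m) : unitCorner F 0 j.succ = 0 := rfl

@[simp] theorem unitCorner_succ_zero (i : Fin l) : unitCorner F i.succ 0 = 0 := rfl

@[simp] theorem unitCorner_succ_succ (i : Fin l) (j : Fin m) :
    unitCorner F i.succ j.succ = F i j := rfl

theorem unitCorner_mul (G : Matrix (Fin m) (Fin k) R) :
    unitCorner F * unitCorner G = unitCorner (F * G) := by
  ext i j
  refine Fin.cases ?_ (fun i => ?_) i <;> refine Fin.cases ?_ (fun j => ?_) j <;>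
    simp [mul_apply, Fin.sum_univ_succ]

theorem det_unitCorner (F : Matrix (Fin l) (Fin l) R) : (unitCorner F).det = F.det := by
  rw [det_succ_row_zero, Fin.sum_univ_succ]
  simp
  rfl

theorem _root_.MatrixEquiv.unitCorner {F G : Matrix (Fin l) (Fin m) R} (h : MatrixEquiv F G) :
    MatrixEquiv (unitCorner F) (unitCorner G) := by
  obtain ⟨U, V, hU, hV, rfl⟩ := h
  exact ⟨Matrix.unitCorner U, Matrix.unitCorner V, by rwa [det_unitCorner],
    by rwa [det_unitCorner], by rw [unitCorner_mul, unitCorner_mul]⟩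

theorem minorIdeal_unitCorner (i : ℕ) :
    minorIdeal (i + 1) (unitCorner F) = minorIdeal i F :=
  minorIdeal_succ_of_unit_corner _ rfl (fun _ => rfl) (fun _ => rfl) i

end UnitCorner

theorem exists_matrixEquiv_unitCorner {R : Type*} [CommRing R] (hR : IsHermiteRing R) {l m : ℕ}
    {F : Matrix (Fin (l + 1)) (Fin (m + 1)) R} {v : Fin (m + 1) → R}
    (hv : Ideal.span (Set.range (F *ᵥ v)) = ⊤) :
    ∃ G : Matrix (Fin l) (Fin m) R, MatrixEquiv F (unitCorner G) := by
  have hv' : Ideal.span (Set.range v) = ⊤ := by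
    rw [eq_top_iff, ← hv, Ideal.span_le]
    rintro _ ⟨i, rfl⟩
    rw [mulVec_eq_sum, Finset.sum_apply]
    exact (Ideal.span (Set.range v)).sum_mem fun j _ =>
      Ideal.mul_mem_left _ _ (Ideal.subset_span (Set.mem_range_self j))
  obtain ⟨W, hW, hWv⟩ := hR l _ hv
  obtain ⟨T, hT, hTv⟩ := hR m _ hv'
  have hv1 : v = T⁻¹ *ᵥ Pi.single 0 1 := by
    rw [← hTv, mulVec_mulVec, nonsing_inv_mul _ hT, one_mulVec]
  set H := W * F * T⁻¹ with hH
  have hH0 (i) : H i 0 = Pi.single (M := fun _ => R) 0 1 i := by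
    have : H *ᵥ Pi.single 0 1 = Pi.single 0 1 := by
      rw [hH, ← mulVec_mulVec, ← hv1, ← mulVec_mulVec, hWv]
    simpa using congrFun this i
  -- column operations clearing the first row
  let C : Matrix (Fin (m + 1)) (Fin (m + 1)) R :=
    of (Fin.cons (Fin.cons 1 fun j => -H 0 j.succ) fun i =>
      Fin.cons 0 fun j => (1 : Matrix _ _ R) i j)
  have hC : C.det = 1 := by
    rw [det_succ_column_zero, Fin.sum_univ_succ]
    have : C.submatrix Fin.succ Fin.succ = 1 := rfl
    simp [C]
    exact this ▸ det_one
  have hHC : H * C = unitCorner (H.submatrix Fin.succ Fin.succ) := by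
    ext i j
    refine Fin.cases ?_ (fun i => ?_) i <;> refine Fin.cases ?_ (fun j => ?_) j <;>
      simp [mul_apply, Fin.sum_univ_succ, C, hH0, one_apply]
  refine ⟨H.submatrix Fin.succ Fin.succ, MatrixEquiv.symm ⟨W, T⁻¹ * C, hW, ?_, ?_⟩⟩
  · rw [det_mul, hC, mul_one]
    exact isUnit_nonsing_inv_det _ hT
  · rw [← hHC, hH, Matrix.mul_assoc]

/-- The `l × m` matrix with diagonal entries `p ^ s 0, …, p ^ s (r - 1)` and zeros elsewhere. -/
def powDiagonal {R : Type*} [CommRing R] (p : R) (r : ℕ) (s : ℕ → ℕ) (l m : ℕ) :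
    Matrix (Fin l) (Fin m) R :=
  of fun i j => if (i : ℕ) = j ∧ (i : ℕ) < r then p ^ s i else 0

theorem unitCorner_powDiagonal {R : Type*} [CommRing R] (p : R) (r : ℕ) {s : ℕ → ℕ} (hs : s 0 = 0)
    (l m : ℕ) : unitCorner (powDiagonal p r (fun i => s (i + 1)) l m) =
      powDiagonal p (r + 1) s (l + 1) (m + 1) := by
  ext i j
  refine Fin.cases ?_ (fun i => ?_) i <;> refine Fin.cases ?_ (fun j => ?_) j <;>
    simp [powDiagonal, hs]

theorem matrixEquiv_powDiagonal {A : Type u} {B : Type v} [CommRing A] [IsDomain A] [CommRing B]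
    [IsDomain B] {p : A} (hp : p ≠ 0) (π : A →+* B) (hπ : Function.Surjective π)
    (hker : RingHom.ker π = Ideal.span {p}) (hA : ProjectivesAreFree A) (hA' : IsHermiteRing A)
    (hB : ProjectivesAreFree B)
    (hlift : ∀ (ρ : ℕ) (v : Fin (ρ + 2) → B), Ideal.span (Set.range v) = ⊤ →
      LiftableOrbit π v (Pi.single 0 1))
    {r : ℕ} {s : ℕ → ℕ} (hs : Monotone s) {l m : ℕ} (F : Matrix (Fin l) (Fin m) A)
    (hF : ∀ i ≤ r, minorIdeal i F = Ideal.span {p ^ ∑ j ∈ Finset.range i, s j})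
    (hF' : minorIdeal (r + 1) F = ⊥) : MatrixEquiv F (powDiagonal p r s l m) := by
  induction r generalizing s l m with
  | zero =>
    have h0 : F = powDiagonal p 0 s l m := by
      ext i j
      have := minorIdeal_one_le.1 hF'.le i j
      simpa [powDiagonal] using this
    exact ⟨1, 1, by simp, by simp, by simp [h0]⟩
  | succ r ih =>
    have key : ∀ {s : ℕ → ℕ}, Monotone s → s 0 = 0 → ∀ F : Matrix (Fin l) (Fin m) A,
        (∀ i ≤ r + 1, minorIdeal i F = Ideal.span {p ^ ∑ j ∈ Finset.range i, s j}) →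
        minorIdeal (r + 1 + 1) F = ⊥ → MatrixEquiv F (powDiagonal p (r + 1) s l m) := by
      intro s hs hs0 F hF hF'
      let k := Nat.findGreatest (fun k => ∑ j ∈ Finset.range k, s j = 0) (r + 1)
      have hk : 0 < k := Nat.le_findGreatest (Nat.le_add_left 1 r) (by simpa using hs0)
      have hkr : k ≤ r + 1 := Nat.findGreatest_le _
      have hk0 : ∑ j ∈ Finset.range k, s j = 0 :=
        Nat.findGreatest_spec (P := fun k => ∑ j ∈ Finset.range k, s j = 0)
          (Nat.zero_le (r + 1)) (by simp)
      obtain ⟨v, hv⟩ := exists_mulVec_unimodular hp π hπ hker hA hB hlift F (hF _ le_rfl) hF' hk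
        (by rw [hF k hkr, hk0, pow_zero, Ideal.span_singleton_one]) (by
          obtain h | h := hkr.lt_or_eq
          · have := Nat.findGreatest_is_greatest (Nat.lt_succ_self k) h
            rw [hF _ h, Ideal.span_singleton_le_span_singleton]
            exact dvd_pow_self p this
          · rw [h, hF']
            exact bot_le)
      obtain _ | l := l
      · rw [Set.range_eq_empty, Ideal.span_empty] at hv
        exact absurd hv bot_ne_top
      obtain _ | m := m
      · have h0 : F *ᵥ v = 0 := by ext; simp [mulVec]
        rw [h0, eq_top_iff] at hv
        have := hv (Submodule.mem_top (x := (1 : A)))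
        simp at this
      obtain ⟨G, hG⟩ := exists_matrixEquiv_unitCorner hA' hv
      refine hG.trans ?_
      rw [← unitCorner_powDiagonal p r hs0]
      refine (ih (fun i j h => hs (Nat.succ_le_succ h)) G (fun i hi => ?_) ?_).unitCorner
      · rw [← minorIdeal_unitCorner, ← hG.minorIdeal_eq, hF _ (Nat.succ_le_succ hi),
          Finset.sum_range_succ', hs0, add_zero]
      · rw [← minorIdeal_unitCorner, ← hG.minorIdeal_eq, hF']
    have hdvd (i j) : p ^ s 0 ∣ F i j := by
      have := mem_minorIdeal_one F i j
      rw [hF 1 (Nat.le_add_left 1 r)] at this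
      simpa [Ideal.mem_span_singleton] using this
    choose F₁ hF₁ using hdvd
    obtain rfl : F = p ^ s 0 • of F₁ := by
      ext i j
      simpa using hF₁ i j
    have hsum (i : ℕ) : ∑ j ∈ Finset.range i, s j =
        s 0 * i + ∑ j ∈ Finset.range i, (s j - s 0) := by
      have : ∀ j ∈ Finset.range i, s j = s 0 + (s j - s 0) :=
        fun j _ => (Nat.add_sub_cancel' (hs (Nat.zero_le j))).symm
      rw [Finset.sum_congr rfl this, Finset.sum_add_distrib]
      simp [mul_comm]
    have hne (i : ℕ) : (p ^ s 0) ^ i ≠ 0 := pow_ne_zero _ (pow_ne_zero _ hp)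
    have := (key (s := fun j => s j - s 0) (fun i j h => Nat.sub_le_sub_right (hs h) _)
      (Nat.sub_self _) (of F₁) (fun i hi => ?_) ?_).smul (p ^ s 0)
    · refine this.trans ⟨1, 1, by simp, by simp, ?_⟩
      ext i j
      simp [powDiagonal, ← pow_add, Nat.add_sub_cancel' (hs (Nat.zero_le _))]
    · rw [← Ideal.span_singleton_mul_right_inj (hne i), ← minorIdeal_smul, hF i hi,
        Ideal.span_singleton_mul_span_singleton, ← pow_mul, ← pow_add, ← hsum]
    · rw [← Ideal.span_singleton_mul_right_inj (hne (r + 1 + 1)), ← minorIdeal_smul, hF',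
        Ideal.mul_bot]

end Matrix

end SmithForm

namespace MvPolynomial

variable (K : Type*) [Field K] (n : ℕ)

/-- The isomorphism `K[x₀, …, xₙ] ≃ K[x₀][x₁, …, xₙ]`. -/
noncomputable def finSuccEquivRight :
    MvPolynomial (Fin (n + 1)) K ≃ₐ[K] MvPolynomial (Fin n) (Polynomial K) :=
  (renameEquiv K (_root_.finSuccEquiv n)).trans (optionEquivRight K (Fin n))

theorem finSuccEquivRight_polyImage (p : Polynomial K) :
    finSuccEquivRight K n (polyImage n p) = C p := by
  have h : (finSuccEquivRight K n).toAlgHom.comp (Polynomial.aeval (X 0)) =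
      IsScalarTower.toAlgHom K (Polynomial K) (MvPolynomial (Fin n) (Polynomial K)) := by
    apply Polynomial.algHom_ext
    simp [finSuccEquivRight, algebraMap_eq]
  exact DFunLike.congr_fun h p

theorem polyImage_ne_zero {p : Polynomial K} (hp : p ≠ 0) : polyImage n p ≠ 0 := by
  intro h
  have := finSuccEquivRight_polyImage K n p
  rw [h, map_zero] at this
  exact hp (C_injective _ _ (by rw [← this, C_0]))

variable {K} {p : Polynomial K} [Fact (Irreducible p)]

/-- Reduction of `K[x₀, …, xₙ]` modulo a polynomial `p ∈ K[x₀]`. -/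
noncomputable def polyReduction (p : Polynomial K) :
    MvPolynomial (Fin (n + 1)) K →+* MvPolynomial (Fin n) (AdjoinRoot p) :=
  (map (AdjoinRoot.mk p)).comp (finSuccEquivRight K n : _ →+* _)

theorem polyReduction_surjective (p : Polynomial K) : Function.Surjective (polyReduction n p) :=
  (map_surjective _ AdjoinRoot.mk_surjective).comp (finSuccEquivRight K n).surjective

theorem ker_polyReduction (p : Polynomial K) :
    RingHom.ker (polyReduction n p) = Ideal.span {polyImage n p} := by
  have hmk : RingHom.ker (AdjoinRoot.mk p) = Ideal.span {p} := by
    ext q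
    rw [RingHom.mem_ker, AdjoinRoot.mk_eq_zero, Ideal.mem_span_singleton]
  ext f
  rw [RingHom.mem_ker, polyReduction, RingHom.comp_apply, ← RingHom.mem_ker, ker_map,
    hmk, Ideal.map_span, Set.image_singleton,
    ← finSuccEquivRight_polyImage, Ideal.mem_span_singleton, Ideal.mem_span_singleton]
  exact map_dvd_iff (finSuccEquivRight K n)

theorem liftableOrbit_polyReduction (ρ : ℕ) (v : Fin (ρ + 2) → MvPolynomial (Fin n) (AdjoinRoot p))
    (hv : Ideal.span (Set.range v) = ⊤) :
    LiftableOrbit (polyReduction n p) v (Pi.single 0 1) := by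
  have h := liftableOrbit_single (AdjoinRoot.mk p) AdjoinRoot.mk_surjective
    (zero_ne_one : (0 : Fin (ρ + 2)) ≠ 1) n v hv
  refine h.map (finSuccEquivRight K n).symm.toRingEquiv.toRingHom (RingHom.id _) ?_
  refine RingHom.ext fun f => ?_
  simp [polyReduction]

end MvPolynomial

namespace Matrix

variable {R : Type*} [CommRing R] [IsDomain R] {l m : ℕ}

theorem minorIdeal_eq_span_of_reducedMinorsUnitIdeal {i : ℕ} {F : Matrix (Fin l) (Fin m) R}
    {d : R} (hd : IsGcdOf d (minorsSet i F)) (h : ReducedMinorsUnitIdeal i F) :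
    minorIdeal i F = Ideal.span {d} := by
  obtain ⟨e, he, h⟩ := h
  have hde : Ideal.span {d} = Ideal.span {e} :=
    Ideal.span_singleton_eq_span_singleton.2 (associated_of_dvd_dvd (he.2 d hd.1) (hd.2 e he.1))
  rw [hde, minorIdeal_eq_span_minorsSet]
  apply le_antisymm
  · rw [Ideal.span_le]
    exact fun a ha => Ideal.mem_span_singleton.2 (he.1 a ha)
  · rw [← Ideal.mul_top (Ideal.span {e}), ← h, Ideal.span_mul_span', Ideal.span_le]
    rintro _ ⟨_, rfl, b, hb, rfl⟩
    exact Ideal.subset_span hb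

theorem reducedMinorsUnitIdeal_of_mem {i : ℕ} {F : Matrix (Fin l) (Fin m) R}
    {d : R} (hd0 : d ≠ 0) (hd : IsGcdOf d (minorsSet i F)) (h : d ∈ minorIdeal i F) :
    ReducedMinorsUnitIdeal i F := by
  refine ⟨d, hd, ?_⟩
  rw [← Ideal.span_singleton_mul_right_inj hd0, Ideal.mul_top]
  apply le_antisymm
  · exact Ideal.mul_le_left
  · rw [Ideal.span_singleton_le_iff_mem]
    suffices minorIdeal i F ≤ _ from this h
    rw [minorIdeal_eq_span_minorsSet, Ideal.span_le]
    intro a ha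
    obtain ⟨b, rfl⟩ := hd.1 a ha
    exact Ideal.mul_mem_mul (Ideal.mem_span_singleton_self d) (Ideal.subset_span ha)

theorem pow_sum_mem_minorIdeal_powDiagonal {R : Type*} [CommRing R] (p : R) {r : ℕ} (s : ℕ → ℕ)
    {l m i : ℕ} (hi : i ≤ r) (hl : i ≤ l) (hm : i ≤ m) :
    p ^ ∑ j ∈ Finset.range i, s j ∈ minorIdeal i (powDiagonal p r s l m) := by
  have := det_submatrix_mem_minorIdeal (powDiagonal p r s l m) (Fin.castLE hl) (Fin.castLE hm)
  have hdiag : (powDiagonal p r s l m).submatrix (Fin.castLE hl) (Fin.castLE hm) =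
      diagonal fun j : Fin i => p ^ s j := by
    ext a b
    have := a.2.trans_le hi
    simp [powDiagonal, diagonal_apply, Fin.ext_iff, this]
  rwa [hdiag, det_diagonal, Finset.prod_pow_eq_pow_sum, Fin.sum_univ_eq_sum_range] at this

end Matrix

theorem Fin.sum_Iic_eq_sum_range {r : ℕ} (s : ℕ → ℕ) (i : Fin r) :
    ∑ j ∈ Finset.Iic i, s j = ∑ j ∈ Finset.range (i + 1), s j := by
  rw [Nat.range_succ_eq_Iic, ← Fin.map_valEmbedding_Iic, Finset.sum_map]
  rfl

/-- let `F ∈ A^{l×m}` with `rank F = r > 0` and `d_r(F) = p^t`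
up to a unit (`p ∈ K[x₁]` irreducible, `t ≥ 1`), and Smith form with
`diag(p^{s₁}, …, p^{s_r})` (`s₁ ≤ ⋯ ≤ s_r`) in the upper-left `r × r` corner and
zeros elsewhere (i.e. `d_i(F) = p^{s₁ + ⋯ + s_i}` up to associates for `i ≤ r`).
Then `F` is equivalent to its Smith form iff `J_i(F) = A` for `i = 1, …, r`. -/
theorem stmt11 {K : Type*} [Field K] {n l m r : ℕ} (hr : 0 < r)
    (p : Polynomial K) (hp : Irreducible p) (t : ℕ) (ht : 0 < t)
    (F : Matrix (Fin l) (Fin m) (MvPolynomial (Fin (n + 1)) K))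
    (hrank : F.rank = r)
    (hdr : IsGcdOf (polyImage n p ^ t) (minorsSet r F))
    (s : Fin r → ℕ) (hs : Monotone s)
    (hSmith : ∀ i : Fin r,
      IsGcdOf (polyImage n p ^ (∑ j ∈ Finset.Iic i, s j)) (minorsSet ((i : ℕ) + 1) F)) :
    MatrixEquiv F
      (Matrix.of (fun (i : Fin l) (j : Fin m) =>
        if h : (i : ℕ) = (j : ℕ) ∧ (i : ℕ) < r
          then polyImage n p ^ s ⟨i, h.2⟩ else 0)) ↔
      ∀ i : ℕ, 1 ≤ i → i ≤ r → ReducedMinorsUnitIdeal i F := by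
  have : Fact (Irreducible p) := ⟨hp⟩
  have hp0 : polyImage n p ≠ 0 := MvPolynomial.polyImage_ne_zero K n hp.ne_zero
  obtain ⟨s, hs', rfl⟩ : ∃ s' : ℕ → ℕ, Monotone s' ∧ s = fun i : Fin r => s' i := by
    refine ⟨fun j => s ⟨min j (r - 1), by omega⟩, fun i j h => hs ?_, ?_⟩
    · exact Fin.mk_le_mk.2 (min_le_min_right _ h)
    · ext i
      congr 1
      ext
      simp only
      omega
  have hdiag : (Matrix.of (fun (i : Fin l) (j : Fin m) =>
      if h : (i : ℕ) = (j : ℕ) ∧ (i : ℕ) < r then polyImage n p ^ s i else 0)) =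
      Matrix.powDiagonal (polyImage n p) r s l m := by
    ext1 i j
    simp [Matrix.powDiagonal]
  rw [hdiag]
  have hgcd (i : ℕ) (h1 : 1 ≤ i) (hi : i ≤ r) :
      IsGcdOf (polyImage n p ^ ∑ j ∈ Finset.range i, s j) (minorsSet i F) := by
    obtain ⟨i, rfl⟩ := Nat.exists_eq_add_of_le' h1
    rw [← Fin.sum_Iic_eq_sum_range s ⟨i, hi⟩]
    exact hSmith ⟨i, hi⟩
  constructor
  · intro h i h1 hi
    refine Matrix.reducedMinorsUnitIdeal_of_mem (pow_ne_zero _ hp0) (hgcd i h1 hi) ?_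
    rw [h.minorIdeal_eq]
    refine Matrix.pow_sum_mem_minorIdeal_powDiagonal _ s hi (hi.trans ?_) (hi.trans ?_)
    · simpa [hrank] using F.rank_le_height
    · simpa [hrank] using F.rank_le_width
  · intro h
    refine Matrix.matrixEquiv_powDiagonal hp0 (MvPolynomial.polyReduction n p)
      (MvPolynomial.polyReduction_surjective n p) (MvPolynomial.ker_polyReduction n p)
      (MvPolynomial.projectivesAreFree K (n + 1)) (MvPolynomial.isHermiteRing K (n + 1))
      (MvPolynomial.projectivesAreFree (AdjoinRoot p) n)
      (MvPolynomial.liftableOrbit_polyReduction n) hs' F (fun i hi => ?_) ?_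
    · obtain rfl | h1 := Nat.eq_zero_or_pos i
      · simp [Matrix.minorIdeal_zero]
      · exact Matrix.minorIdeal_eq_span_of_reducedMinorsUnitIdeal (hgcd i h1 hi) (h i h1 hi)
    · rw [← hrank]
      exact F.minorIdeal_rank_succ
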